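/- arXiv:2403.15844 — 2 statements merged into one kernel-verified Lean document; each statement's English description precedes it below -/
import Mathlib

section
/- Let A be a standard graded polynomial ring over an infinite field K and I a homogeneous almost complete intersection ideal generated by a homogeneous d-sequence f_1, ..., f_n of degrees d_1, ..., d_n such that f_1, ..., f_{n-1} is a regular sequence. Assume reg(A/I) < (∑_{l=1}^{n-1} d_l) − n + 1 and d_n = max{d_i}. Then for all s ≥ 2 and all i = 0, ..., n − 1, reg(A/(⟨f_1, ..., f_i⟩ + I^s)) = (∑_{l=1}^{n} d_l) − n + (s − 2)d_n. -/
open Ideal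

/-- A sequence `f 0, …, f (n-1)` is a *d-sequence* in `A` if
`(⟨f_0,…,f_{i-1}⟩ : f_i) ∩ ⟨f_0,…,f_{n-1}⟩ = ⟨f_0,…,f_{i-1}⟩` for every `i`. -/
def IsDSequence {A : Type*} [CommRing A] {n : ℕ} (f : Fin n → A) : Prop :=
  ∀ i : Fin n,
    (Ideal.span (f '' {j | j < i})).colon (Ideal.span {f i}) ⊓ Ideal.span (Set.range f)
      = Ideal.span (f '' {j | j < i})

/-- A (proper) regular sequence: each `f i` is a nonzerodivisor modulo the previous ones,
and the sequence generates a proper ideal. -/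
def IsRegSeq {A : Type*} [CommRing A] {n : ℕ} (f : Fin n → A) : Prop :=
  (∀ i : Fin n, ∀ a : A, a * f i ∈ Ideal.span (f '' {j | j < i}) →
      a ∈ Ideal.span (f '' {j | j < i}))
  ∧ Ideal.span (Set.range f) ≠ ⊤

/-- Extension of an `ℕ`-graded family of submodules to `ℤ` (zero in negative degrees). -/
def zg {K A : Type*} [Semiring K] [AddCommMonoid A] [Module K A]
    (𝒜 : ℕ → Submodule K A) : ℤ → Submodule K A :=
  fun z => if 0 ≤ z then 𝒜 z.toNat else ⊥

/-- The irrelevant (graded maximal) ideal of a graded algebra. -/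
def irrel {K A : Type*} [CommRing K] [CommRing A] [Algebra K A]
    (𝒜 : ℕ → Submodule K A) : Ideal A :=
  Ideal.span (⋃ n : ℕ, ((𝒜 (n + 1) : Submodule K A) : Set A))

/-- `𝒜` is a standard grading: `𝒜 0 = K·1`, the grading is generated in degree one,
and the degree-one part is finitely generated. -/
def IsStdGraded {K A : Type*} [CommSemiring K] [Semiring A] [Algebra K A]
    (𝒜 : ℕ → Submodule K A) : Prop :=
  𝒜 0 = 1 ∧ (∀ n : ℕ, 𝒜 (n + 1) = 𝒜 1 * 𝒜 n) ∧ (𝒜 1).FG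

/-- A minimal graded free resolution of the graded module `M` (graded pieces `ℳ`) over the
`γ`-graded ring `A` (graded pieces `𝒜`, graded maximal ideal `𝔪`):
free modules `ι i →₀ A` with generator degrees `σ i`, differentials `d`, augmentation `ε`,
which is exact, with graded differentials and augmentation, and minimal
(all differentials land in `𝔪 • F`). -/
structure MinGradedFreeRes (K : Type) [Field K] (A : Type) [CommRing A] [Algebra K A]
    {γ : Type} [AddCommGroup γ] (𝒜 : γ → Submodule K A) (𝔪 : Ideal A)
    (M : Type) [AddCommGroup M] [Module A M] [Module K M]
    (ℳ : γ → Submodule K M) where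
  ι : ℕ → Type
  fin : ∀ i, Finite (ι i)
  σ : ∀ i, ι i → γ
  d : ∀ i, (ι (i + 1) →₀ A) →ₗ[A] (ι i →₀ A)
  ε : (ι 0 →₀ A) →ₗ[A] M
  exact_d : ∀ i, Function.Exact (d (i + 1)) (d i)
  exact_ε : Function.Exact (d 0) ε
  surj : Function.Surjective ε
  graded_d : ∀ (i : ℕ) (j : γ) (f : ι (i + 1) →₀ A),
      (∀ k, f k ∈ 𝒜 (j - σ (i + 1) k)) → ∀ k, (d i f) k ∈ 𝒜 (j - σ i k)
  graded_ε : ∀ (j : γ) (f : ι 0 →₀ A),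
      (∀ k, f k ∈ 𝒜 (j - σ 0 k)) → ε f ∈ ℳ j
  minimal : ∀ (i : ℕ) (f : ι (i + 1) →₀ A), d i f ∈ 𝔪 • (⊤ : Submodule A (ι i →₀ A))

/-- Castelnuovo–Mumford regularity read off from a minimal graded free resolution:
`sup { (degree of a generator of F_i) - i }`. -/
noncomputable def MinGradedFreeRes.reg {K : Type} [Field K] {A : Type} [CommRing A]
    [Algebra K A] {𝒜 : ℤ → Submodule K A} {𝔪 : Ideal A} {M : Type} [AddCommGroup M]
    [Module A M] [Module K M] {ℳ : ℤ → Submodule K M}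
    (R : MinGradedFreeRes K A 𝒜 𝔪 M ℳ) : ℤ :=
  sSup {x : ℤ | ∃ (i : ℕ) (k : R.ι i), x = R.σ i k - (i : ℤ)}

/-- The graded pieces of a quotient module `A ⧸ J`. -/
def quotPieces {K A : Type*} [Field K] [CommRing A] [Algebra K A]
    (𝒜 : ℕ → Submodule K A) (J : Ideal A) : ℤ → Submodule K (A ⧸ J) :=
  fun j => (zg 𝒜 j).map ((J.mkQ).restrictScalars K)


/-- The height of an ideal: the infimum of the heights of primes containing it. -/
noncomputable def idealHeight {A : Type*} [CommRing A] (I : Ideal A) : ℕ∞ :=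
  ⨅ (p : PrimeSpectrum A) (_ : I ≤ p.asIdeal), Order.height p

/-- The minimal number of generators of an ideal. -/
noncomputable def minGens {A : Type*} [CommRing A] (I : Ideal A) : ℕ :=
  sInf {k : ℕ | ∃ g : Fin k → A, I = Ideal.span (Set.range g)}

/-- An ideal is a complete intersection if it is generated by a regular sequence. -/
def IsCompleteIntersectionIdeal {R : Type*} [CommRing R] (Q : Ideal R) : Prop :=
  ∃ (k : ℕ) (g : Fin k → R), Q = Ideal.span (Set.range g) ∧ IsRegSeq g

/-- `I` is an almost complete intersection: `μ(I) = ht(I) + 1` and `I` is locally a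
complete intersection at each of its minimal primes. -/
def IsACI {A : Type*} [CommRing A] (I : Ideal A) : Prop :=
  (minGens I : ℕ∞) = idealHeight I + 1 ∧
  ∀ p ∈ I.minimalPrimes, ∀ h : p.IsPrime,
    letI := h
    IsCompleteIntersectionIdeal (I.map (algebraMap A (Localization.AtPrime p)))

/-!
Regularity is read off from Koszul homology: on a regular sequence of linear forms generating the
irrelevant ideal, the Koszul homology of a graded module `N` in homological degree `q` vanishes in
internal degree `j` exactly when the `q`-th module of a minimal free resolution of `N` has no
generator of degree `j`. The long exact sequences of Koszul homology then bound the regularities in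
`0 → A/(P : g)(-e) → A/P → A/(P + (g)) → 0`, where `e = deg g`.

Write `J = (f_1, …, f_{n-1})`, `r = ∑_{l < n} (d_l - 1) = reg (A/J)` and `g = f_n`. For `P = J`, the
hypothesis `reg (A/I) < r` gives `reg (A/(J : g)) = r - d_n`. A d-sequence satisfies
`J : g ^ s = J : g`, and `J + I ^ s = J + (g ^ s)`, so the sequence for `g ^ s` gives
`reg (A/(J + I ^ s)) = r + (s - 1) d_n - 1`. For `P = (f_1, …, f_i) + I ^ s` and the next element
`f_{i+1}`, the colon ideal is `(f_1, …, f_i) + I ^ (s - 1)`, whose quotient has, by induction on `s`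
and by the maximality of `d_n`, a regularity too small to matter. Hence the value at `i = n - 1`
propagates down to all `i`.
-/

section GradedModules

variable {R A : Type*} [CommRing R] [CommRing A] [Algebra R A]

/-- A graded module over the ring with graded pieces `𝒜`. The pieces are only required to be
compatible with the action: they need not span the module, and the shift `N(-e)` is expressed by
re-indexing the pieces in the statements. -/
structure GrMod (𝒜 : ℤ → Submodule R A) where
  carrier : Type*
  [addCommGroup : AddCommGroup carrier]
  [module : Module A carrier]
  piece : ℤ → AddSubgroup carrier
  smul_mem : ∀ {p j : ℤ} {a : A} {c : carrier}, a ∈ 𝒜 p → c ∈ piece j → a • c ∈ piece (j + p)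

/-- A chain complex of graded modules, as one module with an endomorphism of square zero and pieces
indexed by the homological degree `i` and the internal degree `j`. -/
structure GrComplex (𝒜 : ℤ → Submodule R A) where
  carrier : Type*
  [addCommGroup : AddCommGroup carrier]
  [module : Module A carrier]
  d : carrier →ₗ[A] carrier
  d_d : ∀ c, d (d c) = 0
  piece : ℤ → ℤ → AddSubgroup carrier
  d_mem : ∀ {i j : ℤ} {c : carrier}, c ∈ piece (i + 1) j → d c ∈ piece i j
  smul_mem : ∀ {i p j : ℤ} {a : A} {c : carrier},
    a ∈ 𝒜 p → c ∈ piece i j → a • c ∈ piece i (j + p)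

attribute [instance] GrMod.addCommGroup GrMod.module GrComplex.addCommGroup GrComplex.module

variable {𝒜 : ℤ → Submodule R A}

/-- `0 → L(-e) → M → N → 0` is a short exact sequence of graded modules. Surjectivity and exactness
are required piece by piece, because the pieces need not span. -/
structure GrMod.IsShortExact (e : ℤ) {L M N : GrMod 𝒜}
    (φ : L.carrier →ₗ[A] M.carrier) (ψ : M.carrier →ₗ[A] N.carrier) : Prop where
  injective : Function.Injective φ
  comp_apply : ∀ c, ψ (φ c) = 0
  left_mem : ∀ {j : ℤ} {c : L.carrier}, c ∈ L.piece (j - e) → φ c ∈ M.piece j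
  right_mem : ∀ {j : ℤ} {c : M.carrier}, c ∈ M.piece j → ψ c ∈ N.piece j
  surjective : ∀ {j : ℤ} {c : N.carrier}, c ∈ N.piece j → ∃ b ∈ M.piece j, ψ b = c
  exact : ∀ {j : ℤ} {c : M.carrier}, c ∈ M.piece j → ψ c = 0 → ∃ b ∈ L.piece (j - e), φ b = c

namespace GrComplex

/-- The graded module sitting in homological degree `i`. -/
abbrev row (D : GrComplex 𝒜) (i : ℤ) : GrMod 𝒜 where
  carrier := D.carrier
  piece := D.piece i
  smul_mem := D.smul_mem

/-- The boundaries of homological degree `i` and internal degree `j`. -/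
def boundaries (D : GrComplex 𝒜) (i j : ℤ) : AddSubgroup D.carrier :=
  (D.piece (i + 1) j).map D.d.toAddMonoidHom

theorem mem_boundaries {D : GrComplex 𝒜} {i j : ℤ} {z : D.carrier} :
    z ∈ D.boundaries i j ↔ ∃ w ∈ D.piece (i + 1) j, D.d w = z :=
  Iff.rfl

/-- The homology of `D` vanishes in homological degree `i` and internal degree `j`. -/
def IsExactAt (D : GrComplex 𝒜) (i j : ℤ) : Prop :=
  ∀ z ∈ D.piece i j, D.d z = 0 → z ∈ D.boundaries i j

/-- `0 → L(-e) → M → N → 0` is a short exact sequence of complexes of graded modules. -/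
structure IsShortExact (e : ℤ) {L M N : GrComplex 𝒜}
    (φ : L.carrier →ₗ[A] M.carrier) (ψ : M.carrier →ₗ[A] N.carrier) : Prop where
  row : ∀ i, GrMod.IsShortExact e (L := L.row i) (M := M.row i) (N := N.row i) φ ψ
  left_comm : ∀ c, φ (L.d c) = M.d (φ c)
  right_comm : ∀ c, ψ (M.d c) = N.d (ψ c)

namespace IsShortExact

variable {e : ℤ} {L M N : GrComplex 𝒜}
  {φ : L.carrier →ₗ[A] M.carrier} {ψ : M.carrier →ₗ[A] N.carrier} {i j : ℤ}

/-- The map `φ` is zero on homology in homological degree `i`, from internal degree `j - e` to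
internal degree `j`. -/
def NullAt (_ : IsShortExact e φ ψ) (i j : ℤ) : Prop :=
  ∀ z ∈ L.piece i (j - e), L.d z = 0 → φ z ∈ M.boundaries i j

variable (h : IsShortExact e φ ψ)
include h

theorem nullAt_of_isExactAt_middle (hM : M.IsExactAt i j) : h.NullAt i j := fun z hz hdz =>
  hM (φ z) ((h.row i).left_mem hz) (by rw [← h.left_comm, hdz, map_zero])

theorem nullAt_of_isExactAt_left (hL : L.IsExactAt i (j - e)) : h.NullAt i j := by
  intro z hz hdz
  obtain ⟨w, hw, rfl⟩ := hL z hz hdz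
  exact ⟨φ w, (h.row (i + 1)).left_mem hw, (h.left_comm w).symm⟩

theorem isExactAt_middle (hφ : h.NullAt i j) (hN : N.IsExactAt i j) : M.IsExactAt i j := by
  intro z hz hdz
  obtain ⟨w, hw, hwz⟩ := mem_boundaries.1 <|
    hN (ψ z) ((h.row i).right_mem hz) (by rw [← h.right_comm, hdz, map_zero])
  obtain ⟨v, hv, rfl⟩ := (h.row (i + 1)).surjective hw
  have hψ : ψ (z - M.d v) = 0 := by
    rw [map_sub, h.right_comm, hwz, sub_self]
  obtain ⟨a, ha, haz⟩ := (h.row i).exact (sub_mem hz (M.d_mem hv)) hψ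
  have hda : L.d a = 0 := (h.row i).injective (by
    rw [h.left_comm, haz, map_sub, hdz, M.d_d, sub_zero, map_zero])
  have hzv : z - M.d v ∈ M.boundaries i j := haz ▸ hφ a ha hda
  simpa only [sub_add_cancel] using add_mem hzv (mem_boundaries.2 ⟨v, hv, rfl⟩)

theorem isExactAt_right (hL : L.IsExactAt i (j - e)) (hM : M.IsExactAt (i + 1) j) :
    N.IsExactAt (i + 1) j := by
  intro z hz hdz
  obtain ⟨y, hy, rfl⟩ := (h.row (i + 1)).surjective hz
  obtain ⟨a, ha, hay⟩ := (h.row i).exact (M.d_mem hy) (by rw [h.right_comm, hdz])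
  have hda : L.d a = 0 := (h.row i).injective (by rw [h.left_comm, hay, M.d_d, map_zero])
  obtain ⟨u, hu, rfl⟩ := mem_boundaries.1 (hL a ha hda)
  have hdyu : M.d (y - φ u) = 0 := by rw [map_sub, ← h.left_comm, hay, sub_self]
  obtain ⟨v, hv, hdv⟩ := mem_boundaries.1 <|
    hM _ (sub_mem hy ((h.row (i + 1)).left_mem hu)) hdyu
  refine mem_boundaries.2 ⟨ψ v, (h.row (i + 1 + 1)).right_mem hv, ?_⟩
  rw [← h.right_comm, hdv, map_sub, (h.row i).comp_apply, sub_zero]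

theorem isExactAt_left (hφ : h.NullAt i j) (hN : N.IsExactAt (i + 1) j) :
    L.IsExactAt i (j - e) := by
  intro z hz hdz
  obtain ⟨w, hw, hdw⟩ := mem_boundaries.1 (hφ z hz hdz)
  obtain ⟨u, hu, huw⟩ := mem_boundaries.1 <| hN (ψ w) ((h.row (i + 1)).right_mem hw)
    (by rw [← h.right_comm, hdw, (h.row i).comp_apply])
  obtain ⟨v, hv, rfl⟩ := (h.row (i + 1 + 1)).surjective hu
  have hψ : ψ (w - M.d v) = 0 := by
    rw [map_sub, h.right_comm, huw, sub_self]
  obtain ⟨a, ha, haw⟩ := (h.row (i + 1)).exact (sub_mem hw (M.d_mem hv)) hψ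
  refine mem_boundaries.2 ⟨a, ha, (h.row i).injective ?_⟩
  rw [h.left_comm, haw, map_sub, M.d_d, sub_zero, hdw]

end IsShortExact

end GrComplex
end GradedModules

section KoszulComplexes

variable {R A : Type*} [CommRing R] [CommRing A] [Algebra R A] {𝒜 : ℤ → Submodule R A}

namespace GrComplex

/-- The mapping cone of multiplication by the linear form `y` on `D`. -/
def cone (y : 𝒜 1) (D : GrComplex 𝒜) : GrComplex 𝒜 where
  carrier := D.carrier × D.carrier
  d := (D.d ∘ₗ LinearMap.fst A _ _ + (y : A) • LinearMap.snd A _ _).prod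
    (-(D.d ∘ₗ LinearMap.snd A _ _))
  d_d := by
    rintro ⟨a, b⟩
    ext <;> simp [D.d_d]
  piece i j := (D.piece i j).prod (D.piece (i - 1) (j - 1))
  d_mem := by
    rintro i j ⟨a, b⟩ ⟨ha, hb⟩
    have hb' : b ∈ D.piece i (j - 1) := add_sub_cancel_right i 1 ▸ hb
    have hyb : (y : A) • b ∈ D.piece i j := sub_add_cancel j 1 ▸ D.smul_mem y.2 hb'
    have hdb : D.d b ∈ D.piece (i - 1) (j - 1) := D.d_mem ((sub_add_cancel i 1).symm ▸ hb')
    exact ⟨add_mem (D.d_mem ha) hyb, neg_mem (S := AddSubgroup D.carrier) hdb⟩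
  smul_mem := by
    rintro i p j a ⟨b, c⟩ ha ⟨hb, hc⟩
    refine ⟨D.smul_mem ha hb, ?_⟩
    rw [add_sub_right_comm]
    exact D.smul_mem ha hc

theorem IsShortExact.cone {e : ℤ} {L M N : GrComplex 𝒜} {φ : L.carrier →ₗ[A] M.carrier}
    {ψ : M.carrier →ₗ[A] N.carrier} (h : IsShortExact e φ ψ) (y : 𝒜 1) :
    IsShortExact e (L := cone y L) (M := cone y M) (N := cone y N)
      (φ.prodMap φ) (ψ.prodMap ψ) where
  row i :=
    { injective := (h.row i).injective.prodMap (h.row i).injective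
      comp_apply := fun c => Prod.ext ((h.row i).comp_apply c.1) ((h.row i).comp_apply c.2)
      left_mem := by
        rintro j ⟨a, b⟩ ⟨ha, hb⟩
        refine ⟨(h.row i).left_mem ha, (h.row (i - 1)).left_mem ?_⟩
        rwa [sub_right_comm]
      right_mem := fun hc => ⟨(h.row i).right_mem hc.1, (h.row (i - 1)).right_mem hc.2⟩
      surjective := by
        rintro j ⟨a, b⟩ ⟨ha, hb⟩
        obtain ⟨a', ha', rfl⟩ := (h.row i).surjective ha
        obtain ⟨b', hb', rfl⟩ := (h.row (i - 1)).surjective hb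
        exact ⟨(a', b'), ⟨ha', hb'⟩, rfl⟩
      exact := by
        rintro j ⟨a, b⟩ ⟨ha, hb⟩ hab
        obtain ⟨a', ha', rfl⟩ := (h.row i).exact ha (congrArg Prod.fst hab)
        obtain ⟨b', hb', rfl⟩ := (h.row (i - 1)).exact hb (congrArg Prod.snd hab)
        refine ⟨(a', b'), ⟨ha', ?_⟩, rfl⟩
        change b' ∈ L.piece (i - 1) (j - e - 1)
        rwa [sub_right_comm] }
  left_comm := by
    rintro ⟨a, b⟩
    change (φ (L.d a + (y : A) • b), φ (-L.d b)) = (M.d (φ a) + (y : A) • φ b, -M.d (φ b))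
    rw [map_add, map_smul, map_neg, h.left_comm, h.left_comm]
  right_comm := by
    rintro ⟨a, b⟩
    change (ψ (M.d a + (y : A) • b), ψ (-M.d b)) = (N.d (ψ a) + (y : A) • ψ b, -N.d (ψ b))
    rw [map_add, map_smul, map_neg, h.right_comm, h.right_comm]

end GrComplex

namespace GrMod

open scoped Classical in
/-- The complex with `N` in homological degree `0` and zero elsewhere. -/
noncomputable def toComplex (N : GrMod 𝒜) : GrComplex 𝒜 where
  carrier := N.carrier
  d := 0
  d_d _ := rfl
  piece i j := if i = 0 then N.piece j else ⊥
  d_mem _ := zero_mem _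
  smul_mem := by
    intro i p j a c ha hc
    split_ifs with hi
    · rw [if_pos hi] at hc
      exact N.smul_mem ha hc
    · rw [if_neg hi, AddSubgroup.mem_bot] at hc
      rw [hc, smul_zero]
      exact zero_mem _

theorem mem_toComplex_piece_of_ne {N : GrMod 𝒜} {i j : ℤ} (hi : i ≠ 0) {c : N.carrier} :
    c ∈ N.toComplex.piece i j ↔ c = 0 := by
  change c ∈ (if i = 0 then N.piece j else ⊥) ↔ c = 0
  rw [if_neg hi, AddSubgroup.mem_bot]

/-- The Koszul complex of `N` on a list of linear forms, as an iterated mapping cone. -/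
noncomputable def koszul (N : GrMod 𝒜) : List (𝒜 1) → GrComplex 𝒜
  | [] => N.toComplex
  | y :: l => GrComplex.cone y (koszul N l)

section IsShortExact

variable {e : ℤ} {L M N : GrMod 𝒜}
  {φ : L.carrier →ₗ[A] M.carrier} {ψ : M.carrier →ₗ[A] N.carrier}

theorem IsShortExact.toComplex (h : IsShortExact e φ ψ) :
    GrComplex.IsShortExact e (L := L.toComplex) (M := M.toComplex) (N := N.toComplex) φ ψ where
  row i := by
    by_cases hi : i = 0
    · subst hi
      exact ⟨h.injective, h.comp_apply, h.left_mem, h.right_mem, h.surjective, h.exact⟩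
    · refine ⟨h.injective, h.comp_apply, ?_, ?_, ?_, ?_⟩ <;> intro j c hc <;>
        obtain rfl := (mem_toComplex_piece_of_ne hi).1 hc
      · exact (mem_toComplex_piece_of_ne hi).2 (map_zero φ)
      · exact (mem_toComplex_piece_of_ne hi).2 (map_zero ψ)
      · exact ⟨0, zero_mem _, map_zero ψ⟩
      · exact fun _ => ⟨0, zero_mem _, map_zero φ⟩
  left_comm _ := map_zero φ
  right_comm _ := map_zero ψ

/-- The map of Koszul complexes induced by a linear map. -/
noncomputable def koszulMap (φ : L.carrier →ₗ[A] M.carrier) :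
    ∀ l : List (𝒜 1), (L.koszul l).carrier →ₗ[A] (M.koszul l).carrier
  | [] => φ
  | _ :: l => (koszulMap φ l).prodMap (koszulMap φ l)

theorem IsShortExact.koszul (h : IsShortExact e φ ψ) (l : List (𝒜 1)) :
    GrComplex.IsShortExact e (koszulMap φ l) (koszulMap ψ l) := by
  induction l with
  | nil => exact h.toComplex
  | cons y l ih => exact ih.cone y

end IsShortExact

section Augmentation

variable {N : GrMod 𝒜}

/-- The inclusion of `N` as the part of homological degree zero of its Koszul complex. -/
noncomputable def toKoszul (N : GrMod 𝒜) :
    ∀ l : List (𝒜 1), N.carrier →ₗ[A] (N.koszul l).carrier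
  | [] => LinearMap.id
  | _ :: l => LinearMap.inl A _ _ ∘ₗ toKoszul N l

theorem koszulMap_toKoszul {M : GrMod 𝒜} (φ : N.carrier →ₗ[A] M.carrier) (l : List (𝒜 1))
    (b : N.carrier) : koszulMap φ l (N.toKoszul l b) = M.toKoszul l (φ b) := by
  induction l with
  | nil => rfl
  | cons y l ih => exact Prod.ext ih (map_zero (koszulMap φ l))

theorem koszul_d_toKoszul (l : List (𝒜 1)) (b : N.carrier) :
    (N.koszul l).d (N.toKoszul l b) = 0 := by
  induction l with
  | nil => rfl
  | cons y l ih =>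
    change ((N.koszul l).d (N.toKoszul l b) + (y : A) • (0 : (N.koszul l).carrier),
      -(N.koszul l).d 0) = (0, 0)
    rw [ih, smul_zero, add_zero, map_zero, neg_zero]

theorem koszul_piece_neg (l : List (𝒜 1)) {i j : ℤ} {c : (N.koszul l).carrier} (hi : i < 0)
    (hc : c ∈ (N.koszul l).piece i j) : c = 0 := by
  induction l generalizing i j with
  | nil => exact (mem_toComplex_piece_of_ne hi.ne).1 hc
  | cons y l ih => exact Prod.ext (ih hi hc.1) (ih (by omega) hc.2)

theorem koszul_piece_length_lt (l : List (𝒜 1)) {i j : ℤ} {c : (N.koszul l).carrier}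
    (hi : (l.length : ℤ) < i) (hc : c ∈ (N.koszul l).piece i j) : c = 0 := by
  induction l generalizing i j with
  | nil => exact (mem_toComplex_piece_of_ne hi.ne').1 hc
  | cons y l ih =>
    rw [List.length_cons, Nat.cast_succ] at hi
    exact Prod.ext (ih (by omega) hc.1) (ih (by omega) hc.2)

theorem mem_koszul_piece_zero {l : List (𝒜 1)} {j : ℤ} {c : (N.koszul l).carrier} :
    c ∈ (N.koszul l).piece 0 j ↔ ∃ b ∈ N.piece j, N.toKoszul l b = c := by
  induction l with
  | nil => exact ⟨fun hc => ⟨c, hc, rfl⟩, fun ⟨_, hb, hbc⟩ => hbc ▸ hb⟩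
  | cons y l ih =>
    constructor
    · intro hc
      obtain ⟨b, hb, hbc⟩ := ih.1 hc.1
      exact ⟨b, hb, Prod.ext hbc (koszul_piece_neg l (by omega) hc.2).symm⟩
    · rintro ⟨b, hb, rfl⟩
      exact ⟨ih.2 ⟨b, hb, rfl⟩, zero_mem _⟩

theorem koszul_isExactAt_of_neg (N : GrMod 𝒜) (l : List (𝒜 1)) {i : ℤ} (hi : i < 0) (j : ℤ) :
    (N.koszul l).IsExactAt i j := fun _ hz _ =>
  koszul_piece_neg l hi hz ▸ zero_mem _

theorem koszul_isExactAt_of_length_lt (N : GrMod 𝒜) (l : List (𝒜 1)) {i : ℤ}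
    (hi : (l.length : ℤ) < i) (j : ℤ) : (N.koszul l).IsExactAt i j := fun _ hz _ =>
  koszul_piece_length_lt l hi hz ▸ zero_mem _

/-- The elements of degree `j` of `N` that are boundaries in the Koszul complex; they are those
of the form `∑ y • c_y`, with `y` in the list and `c_y ∈ N` of degree `j - 1`. -/
noncomputable def zeroBoundaries (N : GrMod 𝒜) (l : List (𝒜 1)) (j : ℤ) : AddSubgroup N.carrier :=
  ((N.koszul l).boundaries 0 j).comap (N.toKoszul l).toAddMonoidHom

theorem mem_zeroBoundaries {l : List (𝒜 1)} {j : ℤ} {b : N.carrier} :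
    b ∈ N.zeroBoundaries l j ↔ ∃ u ∈ (N.koszul l).piece 1 j, (N.koszul l).d u = N.toKoszul l b :=
  Iff.rfl

theorem mem_zeroBoundaries_nil {j : ℤ} {b : N.carrier} : b ∈ N.zeroBoundaries [] j ↔ b = 0 :=
  ⟨fun ⟨_, _, hb⟩ => hb.symm, fun hb => hb ▸ zero_mem _⟩

theorem mem_zeroBoundaries_cons {y : 𝒜 1} {l : List (𝒜 1)} {j : ℤ} {b : N.carrier} :
    b ∈ N.zeroBoundaries (y :: l) j ↔
      ∃ c ∈ N.piece (j - 1), b - (y : A) • c ∈ N.zeroBoundaries l j := by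
  constructor
  · rintro ⟨⟨u, v⟩, ⟨hu, hv⟩, huv⟩
    obtain ⟨c, hc, rfl⟩ := mem_koszul_piece_zero.1 hv
    have hfst : (N.koszul l).d u + (y : A) • N.toKoszul l c = N.toKoszul l b :=
      congrArg Prod.fst huv
    refine ⟨c, hc, mem_zeroBoundaries.2 ⟨u, hu, ?_⟩⟩
    rw [map_sub, map_smul, ← hfst, add_sub_cancel_right]
  · rintro ⟨c, hc, hbc⟩
    obtain ⟨u, hu, hdu⟩ := mem_zeroBoundaries.1 hbc
    refine ⟨(u, N.toKoszul l c), ⟨hu, mem_koszul_piece_zero.2 ⟨c, hc, rfl⟩⟩, ?_⟩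
    change ((N.koszul l).d u + (y : A) • N.toKoszul l c, -(N.koszul l).d (N.toKoszul l c))
      = (N.toKoszul l b, 0)
    rw [hdu, map_sub, map_smul, sub_add_cancel, koszul_d_toKoszul, neg_zero]

theorem koszul_isExactAt_zero_iff {l : List (𝒜 1)} {j : ℤ} :
    (N.koszul l).IsExactAt 0 j ↔ N.piece j ≤ N.zeroBoundaries l j := by
  constructor
  · exact fun h b hb => h _ (mem_koszul_piece_zero.2 ⟨b, hb, rfl⟩) (koszul_d_toKoszul l b)
  · intro h z hz _
    obtain ⟨b, hb, rfl⟩ := mem_koszul_piece_zero.1 hz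
    exact h hb

/-- The Koszul complex is acyclic as soon as each form of the list acts injectively modulo the
zero boundaries of the forms after it. -/
theorem koszul_isExactAt_of_pos (N : GrMod 𝒜) (l : List (𝒜 1))
    (hreg : ∀ y l', y :: l' <:+ l → ∀ j, ∀ b ∈ N.piece j,
      (y : A) • b ∈ N.zeroBoundaries l' (j + 1) → b ∈ N.zeroBoundaries l' j)
    {i : ℤ} (hi : 0 < i) (j : ℤ) : (N.koszul l).IsExactAt i j := by
  induction l generalizing i j with
  | nil => exact koszul_isExactAt_of_length_lt N [] hi j
  | cons y l ih =>
    have exact_tail {i : ℤ} (hi : 0 < i) (j : ℤ) : (N.koszul l).IsExactAt i j :=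
      ih (fun y' l' hl' => hreg y' l' (hl'.trans (List.suffix_cons y l))) hi j
    rintro ⟨a, b⟩ hab hd
    have ha : a ∈ (N.koszul l).piece i j := hab.1
    have hfst : (N.koszul l).d a + (y : A) • b = 0 := congrArg Prod.fst hd
    have hb_boundary : b ∈ (N.koszul l).boundaries (i - 1) (j - 1) := by
      obtain rfl | hi' : i = 1 ∨ 0 < i - 1 := by omega
      · obtain ⟨b, hb, rfl⟩ := mem_koszul_piece_zero.1 hab.2
        refine hreg y l List.suffix_rfl _ b hb (mem_zeroBoundaries.2 ⟨-a, ?_, ?_⟩)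
        · rw [sub_add_cancel]
          exact neg_mem ha
        · rw [map_neg, map_smul]
          exact (eq_neg_of_add_eq_zero_right hfst).symm
      · exact exact_tail hi' _ b hab.2 (neg_eq_zero.1 (congrArg Prod.snd hd))
    obtain ⟨v, hv, rfl⟩ := GrComplex.mem_boundaries.1 hb_boundary
    rw [sub_add_cancel] at hv
    have hyv : (y : A) • v ∈ (N.koszul l).piece i j :=
      sub_add_cancel j 1 ▸ (N.koszul l).smul_mem y.2 hv
    obtain ⟨u, hu, hdu⟩ := GrComplex.mem_boundaries.1 <| exact_tail hi j (a + (y : A) • v)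
      (add_mem ha hyv) (by rw [map_add, map_smul, hfst])
    have hv' : -v ∈ (N.koszul l).piece (i + 1 - 1) (j - 1) := by
      rw [add_sub_cancel_right]
      exact neg_mem hv
    refine ⟨(u, -v), ⟨hu, hv'⟩, ?_⟩
    change ((N.koszul l).d u + (y : A) • (-v), -(N.koszul l).d (-v)) = (a, (N.koszul l).d v)
    rw [hdu, smul_neg, add_neg_cancel_right, map_neg, neg_neg]

end Augmentation
end GrMod
end KoszulComplexes

section Regularity

variable {R A : Type*} [CommRing R] [CommRing A] [Algebra R A] {𝒜 : ℤ → Submodule R A}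

namespace GrMod

/-- The regularity of `N`, computed from the Koszul homology on the linear forms `l`, is at most
`c`: the homology in homological degree `i` vanishes in internal degrees above `c + i`. -/
def RegLE (l : List (𝒜 1)) (N : GrMod 𝒜) (c : ℤ) : Prop :=
  ∀ i j : ℤ, c < j - i → (N.koszul l).IsExactAt i j

/-- The regularity of `N`, computed from the Koszul homology on the linear forms `l`, is `c`. -/
def HasReg (l : List (𝒜 1)) (N : GrMod 𝒜) (c : ℤ) : Prop :=
  N.RegLE l c ∧ ¬ N.RegLE l (c - 1)

theorem RegLE.mono {l : List (𝒜 1)} {N : GrMod 𝒜} {c c' : ℤ} (h : N.RegLE l c) (hc : c ≤ c') :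
    N.RegLE l c' := fun i j hij => h i j (hc.trans_lt hij)

theorem HasReg.le_of_regLE {l : List (𝒜 1)} {N : GrMod 𝒜} {c c' : ℤ} (h : N.HasReg l c)
    (h' : N.RegLE l c') : c ≤ c' := by
  by_contra! hc
  exact h.2 (h'.mono (by omega))

theorem HasReg.exists_not_isExactAt {l : List (𝒜 1)} {N : GrMod 𝒜} {c : ℤ} (h : N.HasReg l c) :
    ∃ i : ℤ, ¬ (N.koszul l).IsExactAt i (c + i) := by
  by_contra! hex
  refine h.2 fun i j hij => ?_
  obtain hlt | heq : c < j - i ∨ j = c + i := by omega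
  · exact h.1 i j hlt
  · exact heq ▸ hex i

theorem hasReg_of_not_isExactAt {l : List (𝒜 1)} {N : GrMod 𝒜} {c i j : ℤ} (h : N.RegLE l c)
    (hij : j - i = c) (hN : ¬ (N.koszul l).IsExactAt i j) : N.HasReg l c :=
  ⟨h, fun h' => hN (h' i j (by omega))⟩

namespace IsShortExact

variable {e : ℤ} {L M N : GrMod 𝒜} {φ : L.carrier →ₗ[A] M.carrier}
  {ψ : M.carrier →ₗ[A] N.carrier} {l : List (𝒜 1)} {c : ℤ}

theorem regLE_middle (h : IsShortExact e φ ψ) (hL : L.RegLE l (c - e)) (hN : N.RegLE l c) :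
    M.RegLE l c := fun i j hij =>
  (h.koszul l).isExactAt_middle
    ((h.koszul l).nullAt_of_isExactAt_left (hL i (j - e) (by omega))) (hN i j hij)

theorem regLE_right (h : IsShortExact e φ ψ) (hL : L.RegLE l (c + 1 - e)) (hM : M.RegLE l c) :
    N.RegLE l c := fun i j hij => by
  have hN := (h.koszul l).isExactAt_right (i := i - 1) (hL (i - 1) (j - e) (by omega))
    (hM (i - 1 + 1) j (by omega))
  rwa [sub_add_cancel] at hN

theorem regLE_left (h : IsShortExact e φ ψ) (hM : M.RegLE l c) (hN : N.RegLE l (c - 1)) :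
    L.RegLE l (c - e) := fun i j hij => by
  have hL := (h.koszul l).isExactAt_left (j := j + e)
    ((h.koszul l).nullAt_of_isExactAt_middle (hM i (j + e) (by omega)))
    (hN (i + 1) (j + e) (by omega))
  rwa [add_sub_cancel_right] at hL

theorem hasReg_left (h : IsShortExact e φ ψ) (hM : M.HasReg l c) (hN : N.RegLE l (c - 1)) :
    L.HasReg l (c - e) := by
  refine ⟨h.regLE_left hM.1 hN, fun hL => hM.2 (h.regLE_middle ?_ hN)⟩
  rwa [sub_right_comm]

theorem hasReg_right (h : IsShortExact e φ ψ) (hL : L.HasReg l (c + 1 - e)) (hM : M.RegLE l c) :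
    N.HasReg l c := by
  refine ⟨h.regLE_right hL.1 hM, fun hN => hL.2 ?_⟩
  have := h.regLE_left hM hN
  rwa [add_sub_right_comm, add_sub_cancel_right]

theorem hasReg_middle (h : IsShortExact e φ ψ) (hL : L.RegLE l (c - e)) (hN : N.HasReg l c) :
    M.HasReg l c := by
  refine ⟨h.regLE_middle hL hN.1, fun hM => hN.2 (h.regLE_right ?_ hM)⟩
  rwa [sub_add_cancel]

end IsShortExact
end GrMod
end Regularity

section FreeModules

variable {R A : Type*} [CommRing R] [CommRing A] [Algebra R A] {𝒜 : ℤ → Submodule R A}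

/-- The ideal generated by a list of linear forms. -/
def linearIdeal (l : List (𝒜 1)) : Ideal A :=
  Ideal.ofList (l.map Subtype.val)

theorem linearIdeal_cons (y : 𝒜 1) (l : List (𝒜 1)) :
    linearIdeal (y :: l) = Ideal.span {(y : A)} ⊔ linearIdeal l := by
  rw [linearIdeal, List.map_cons, Ideal.ofList_cons, linearIdeal]

/-- A regular sequence of linear forms (read from the end of the list) that generates a proper
ideal containing everything homogeneous of nonzero degree, such as the variables of a polynomial
ring. -/
structure IsCoordinateSystem (l : List (𝒜 1)) : Prop where
  mem_of_mul_mem : ∀ y l', y :: l' <:+ l → ∀ a : A,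
    (y : A) * a ∈ linearIdeal l' → a ∈ linearIdeal l'
  ne_top : linearIdeal l ≠ ⊤
  mem_of_ne_zero : ∀ {z : ℤ} {a : A}, z ≠ 0 → a ∈ 𝒜 z → a ∈ linearIdeal l

section GradedRing

variable [GradedAlgebra 𝒜]

/-- The graded free module with basis elements of degrees `τ`. -/
noncomputable abbrev GrMod.free (𝒜 : ℤ → Submodule R A) [GradedAlgebra 𝒜] {ι : Type*} (τ : ι → ℤ) :
    GrMod 𝒜 where
  carrier := ι →₀ A
  piece j :=
    { carrier := {f | ∀ k, f k ∈ 𝒜 (j - τ k)}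
      add_mem' := fun hf hg k => add_mem (hf k) (hg k)
      zero_mem' := fun _ => zero_mem _
      neg_mem' := fun hf k => neg_mem (hf k) }
  smul_mem ha hf k := by
    rw [add_sub_right_comm, add_comm]
    exact SetLike.mul_mem_graded ha (hf k)

theorem linearIdeal_isHomogeneous (l : List (𝒜 1)) : (linearIdeal l).IsHomogeneous 𝒜 :=
  Ideal.homogeneous_span 𝒜 _ fun x hx => by
    obtain ⟨y, -, rfl⟩ := List.mem_map.1 hx
    exact ⟨1, y.2⟩

theorem exists_sub_mul_mem_of_mem_sup_span {P : Ideal A} (hP : P.IsHomogeneous 𝒜) {e j : ℤ}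
    {g a : A} (hg : g ∈ 𝒜 e) (ha : a ∈ 𝒜 j) (haP : a ∈ P ⊔ Ideal.span {g}) :
    ∃ c ∈ 𝒜 (j - e), a - c * g ∈ P := by
  obtain ⟨p, hp, q, hq, rfl⟩ := Submodule.mem_sup.1 haP
  obtain ⟨c, rfl⟩ := Ideal.mem_span_singleton'.1 hq
  refine ⟨GradedRing.proj 𝒜 (j - e) c, SetLike.coe_mem _, ?_⟩
  have hproj : GradedRing.proj 𝒜 j (c * g) = GradedRing.proj 𝒜 (j - e) c * g := by
    have := DirectSum.coe_decompose_mul_add_of_right_mem 𝒜 (i := j - e) (a := c) hg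
    rwa [sub_add_cancel] at this
  have hsum : p + c * g - GradedRing.proj 𝒜 (j - e) c * g = GradedRing.proj 𝒜 j p := by
    rw [← hproj, sub_eq_iff_eq_add, ← map_add]
    exact (DirectSum.decompose_of_mem_same 𝒜 ha).symm
  exact hsum ▸ hP j hp

namespace GrMod

variable {ι : Type*} {τ : ι → ℤ} {l : List (𝒜 1)}

theorem exists_free_sub_smul_mem {y : 𝒜 1} {j : ℤ} {b : ι →₀ A} (hb : b ∈ (free 𝒜 τ).piece j)
    (hby : ∀ k, b k ∈ linearIdeal (y :: l)) :
    ∃ c : ι →₀ A, c ∈ (free 𝒜 τ).piece (j - 1) ∧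
      ∀ k, (b - (y : A) • c) k ∈ linearIdeal l := by
  classical
  have exists_coeff (k : ι) : ∃ c ∈ 𝒜 (j - 1 - τ k),
      b k - c * y ∈ linearIdeal l ∧ (b k = 0 → c = 0) := by
    by_cases hk : b k = 0
    · exact ⟨0, zero_mem _, by simp only [hk, zero_mul, sub_zero, zero_mem], fun _ => rfl⟩
    · have hbk : b k ∈ linearIdeal l ⊔ Ideal.span {(y : A)} := by
        rw [sup_comm, ← linearIdeal_cons]
        exact hby k
      obtain ⟨c, hc, hbc⟩ :=
        exists_sub_mul_mem_of_mem_sup_span (linearIdeal_isHomogeneous l) y.2 (hb k) hbk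
      exact ⟨c, sub_right_comm j (τ k) 1 ▸ hc, hbc, fun h => absurd h hk⟩
  choose c hc hbc hc_zero using exists_coeff
  refine ⟨Finsupp.onFinset b.support c fun k hk =>
    Finsupp.mem_support_iff.2 (mt (hc_zero k) hk), hc, fun k => ?_⟩
  rw [Finsupp.sub_apply, Finsupp.smul_apply, Finsupp.onFinset_apply, smul_eq_mul, mul_comm]
  exact hbc k

theorem mem_zeroBoundaries_free {j : ℤ} {b : ι →₀ A} (hb : b ∈ (free 𝒜 τ).piece j) :
    b ∈ (free 𝒜 τ).zeroBoundaries l j ↔ ∀ k, b k ∈ linearIdeal l := by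
  induction l generalizing b with
  | nil =>
    rw [mem_zeroBoundaries_nil]
    simp only [linearIdeal, List.map_nil, Ideal.ofList_nil, Ideal.mem_bot]
    exact Finsupp.ext_iff
  | cons y l ih =>
    have sub_smul_mem {c : ι →₀ A} (hc : c ∈ (free 𝒜 τ).piece (j - 1)) :
        b - (y : A) • c ∈ (free 𝒜 τ).piece j :=
      sub_mem hb (sub_add_cancel j 1 ▸ (free 𝒜 τ).smul_mem y.2 hc)
    rw [mem_zeroBoundaries_cons]
    constructor
    · rintro ⟨c, hc, hbc⟩ k
      have hbk : b k = (y : A) * (c : ι →₀ A) k + (b - (y : A) • (c : ι →₀ A)) k :=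
        (add_sub_cancel _ _).symm
      rw [linearIdeal_cons, hbk]
      exact Submodule.add_mem_sup (Ideal.mul_mem_right _ _ (Ideal.mem_span_singleton_self _))
        ((ih (sub_smul_mem hc)).1 hbc k)
    · intro hbk
      obtain ⟨c, hc, hbc⟩ := exists_free_sub_smul_mem hb hbk
      exact ⟨c, hc, (ih (sub_smul_mem hc)).2 hbc⟩

theorem free_isExactAt_of_pos (hl : IsCoordinateSystem l) {i : ℤ} (hi : 0 < i) (j : ℤ) :
    ((free 𝒜 τ).koszul l).IsExactAt i j := by
  refine koszul_isExactAt_of_pos _ l (fun y l' hl' j b hb hyb => ?_) hi j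
  exact (mem_zeroBoundaries_free hb).2 fun k => hl.mem_of_mul_mem y l' hl' _
    ((mem_zeroBoundaries_free ((free 𝒜 τ).smul_mem y.2 hb)).1 hyb k)

theorem free_isExactAt_zero_iff (hl : IsCoordinateSystem l) {j : ℤ} :
    ((free 𝒜 τ).koszul l).IsExactAt 0 j ↔ ∀ k, τ k ≠ j := by
  classical
  rw [koszul_isExactAt_zero_iff]
  constructor
  · rintro h k rfl
    have hk : Finsupp.single k (1 : A) ∈ (free 𝒜 τ).piece (τ k) := by
      intro k'
      obtain rfl | hne := eq_or_ne k k'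
      · rw [Finsupp.single_eq_same, sub_self]
        exact SetLike.one_mem_graded 𝒜
      · rw [Finsupp.single_eq_of_ne' hne]
        exact zero_mem _
    have h_one := (mem_zeroBoundaries_free hk).1 (h hk) k
    rw [Finsupp.single_eq_same] at h_one
    exact hl.ne_top ((Ideal.eq_top_iff_one _).2 h_one)
  · intro h b hb
    exact (mem_zeroBoundaries_free hb).2 fun k =>
      hl.mem_of_ne_zero (sub_ne_zero.2 (h k).symm) (hb k)

end GrMod
end GradedRing
end FreeModules

section FreeCovers

variable {R A : Type*} [CommRing R] [CommRing A] [Algebra R A] {𝒜 : ℤ → Submodule R A}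

namespace GrMod

/-- The pieces of `N` are the images of projections that kill one another, as is the case when
`N` is the direct sum of its pieces. -/
def HasProjections (N : GrMod 𝒜) : Prop :=
  ∀ j, ∃ π : N.carrier →+ N.carrier,
    (∀ c ∈ N.piece j, π c = c) ∧ ∀ i, i ≠ j → ∀ c ∈ N.piece i, π c = 0

/-- The submodule `S` of `N`, with the induced grading. -/
abbrev sub (N : GrMod 𝒜) (S : Submodule A N.carrier) : GrMod 𝒜 where
  carrier := S
  piece j := (N.piece j).comap S.subtype.toAddMonoidHom
  smul_mem := N.smul_mem

variable [GradedAlgebra 𝒜] {ι : Type*} {τ : ι → ℤ}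

/-- The projection of a graded free module onto its piece of degree `j`. -/
noncomputable def freeProj (𝒜 : ℤ → Submodule R A) [GradedAlgebra 𝒜] (τ : ι → ℤ) (j : ℤ) :
    (ι →₀ A) →+ (ι →₀ A) where
  toFun f := Finsupp.onFinset f.support (fun k => GradedRing.proj 𝒜 (j - τ k) (f k)) fun k hk =>
    Finsupp.mem_support_iff.2 fun h => hk (by rw [h, map_zero])
  map_zero' := Finsupp.ext fun _ => map_zero (GradedRing.proj 𝒜 _)
  map_add' _ _ := Finsupp.ext fun _ => map_add (GradedRing.proj 𝒜 _) _ _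

theorem freeProj_apply (j : ℤ) (f : ι →₀ A) (k : ι) :
    freeProj 𝒜 τ j f k = DirectSum.decompose 𝒜 (f k) (j - τ k) :=
  rfl

theorem freeProj_mem (j : ℤ) (f : ι →₀ A) : freeProj 𝒜 τ j f ∈ (free 𝒜 τ).piece j := fun k =>
  SetLike.coe_mem (DirectSum.decompose 𝒜 (f k) (j - τ k))

theorem freeProj_of_mem {j : ℤ} {f : ι →₀ A} (hf : f ∈ (free 𝒜 τ).piece j) :
    freeProj 𝒜 τ j f = f :=
  Finsupp.ext fun k => DirectSum.decompose_of_mem_same 𝒜 (hf k)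

theorem freeProj_of_mem_ne {i j : ℤ} (hij : i ≠ j) {f : ι →₀ A}
    (hf : f ∈ (free 𝒜 τ).piece i) : freeProj 𝒜 τ j f = 0 :=
  Finsupp.ext fun k => DirectSum.decompose_of_mem_ne 𝒜 (hf k) fun h => hij (sub_left_injective h)

theorem free_hasProjections : (free 𝒜 τ).HasProjections := fun j =>
  ⟨freeProj 𝒜 τ j, fun _ hc => freeProj_of_mem hc, fun _ hij _ hc => freeProj_of_mem_ne hij hc⟩

theorem single_mem_free_piece {z : ℤ} {a : A} (ha : a ∈ 𝒜 z) (k : ι) :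
    Finsupp.single k a ∈ (free 𝒜 τ).piece (z + τ k) := by
  classical
  intro k'
  obtain rfl | hne := eq_or_ne k k'
  · rwa [Finsupp.single_eq_same, add_sub_cancel_right]
  · rw [Finsupp.single_eq_of_ne' hne]
    exact zero_mem _

theorem free_induction {p : (ι →₀ A) → Prop} (zero : p 0) (add : ∀ f g, p f → p g → p (f + g))
    (homogeneous : ∀ j, ∀ f ∈ (free 𝒜 τ).piece j, p f) (f : ι →₀ A) : p f := by
  induction f using Finsupp.induction_linear with
  | zero => exact zero
  | add f g hf hg => exact add f g hf hg
  | single k a =>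
    induction a using DirectSum.Decomposition.inductionOn 𝒜 with
    | zero => exact Finsupp.single_zero (M := A) k ▸ zero
    | homogeneous a => exact homogeneous _ _ (single_mem_free_piece a.2 k)
    | add a b ha hb => exact Finsupp.single_add k a b ▸ add _ _ ha hb

theorem exists_sum_freeProj_eq (f : ι →₀ A) : ∃ T : Finset ℤ, ∑ j ∈ T, freeProj 𝒜 τ j f = f := by
  classical
  suffices h : ∀ᶠ T : Finset ℤ in Filter.atTop, ∑ j ∈ T, freeProj 𝒜 τ j f = f from h.exists
  induction f using free_induction (𝒜 := 𝒜) (τ := τ) with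
  | zero => exact .of_forall fun T => by simp only [map_zero, Finset.sum_const_zero]
  | add f g hf hg =>
    filter_upwards [hf, hg] with T hf hg
    simp only [map_add, Finset.sum_add_distrib, hf, hg]
  | homogeneous j f hf =>
    filter_upwards [Filter.eventually_ge_atTop {j}] with T hT
    rw [Finset.sum_eq_single_of_mem j (Finset.singleton_subset_iff.1 hT)
      fun i _ hij => freeProj_of_mem_ne hij.symm hf, freeProj_of_mem hf]

variable {N : GrMod 𝒜} {φ : (ι →₀ A) →ₗ[A] N.carrier}

theorem HasProjections.exists_map_freeProj_eq (hN : N.HasProjections)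
    (hφ : ∀ {j : ℤ} {f : ι →₀ A}, f ∈ (free 𝒜 τ).piece j → φ f ∈ N.piece j) (j : ℤ) :
    ∃ π : N.carrier →+ N.carrier, (∀ c ∈ N.piece j, π c = c) ∧
      ∀ f, φ (freeProj 𝒜 τ j f) = π (φ f) := by
  obtain ⟨π, hπ, hπ_ne⟩ := hN j
  refine ⟨π, hπ, fun f => ?_⟩
  induction f using free_induction (𝒜 := 𝒜) (τ := τ) with
  | zero => simp only [map_zero]
  | add f g hf hg => simp only [map_add, hf, hg]
  | homogeneous i f hf =>
    obtain rfl | hij := eq_or_ne i j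
    · rw [freeProj_of_mem hf, hπ _ (hφ hf)]
    · rw [freeProj_of_mem_ne hij hf, hπ_ne i hij _ (hφ hf), map_zero]

theorem HasProjections.exists_mem_free_piece (hN : N.HasProjections)
    (hφ : ∀ {j : ℤ} {f : ι →₀ A}, f ∈ (free 𝒜 τ).piece j → φ f ∈ N.piece j)
    {j : ℤ} {f : ι →₀ A} (hf : φ f ∈ N.piece j) :
    ∃ f' ∈ (free 𝒜 τ).piece j, φ f' = φ f := by
  obtain ⟨π, hπ, hφπ⟩ := hN.exists_map_freeProj_eq hφ j
  exact ⟨freeProj 𝒜 τ j f, freeProj_mem j f, (hφπ f).trans (hπ _ hf)⟩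

theorem HasProjections.freeProj_mem_ker (hN : N.HasProjections)
    (hφ : ∀ {j : ℤ} {f : ι →₀ A}, f ∈ (free 𝒜 τ).piece j → φ f ∈ N.piece j)
    (j : ℤ) {f : ι →₀ A} (hf : f ∈ LinearMap.ker φ) :
    freeProj 𝒜 τ j f ∈ LinearMap.ker φ := by
  obtain ⟨π, -, hφπ⟩ := hN.exists_map_freeProj_eq hφ j
  rw [LinearMap.mem_ker] at hf ⊢
  rw [hφπ, hf, map_zero]

/-- `φ` is a graded surjection from a graded free module with basis degrees `τ` onto `N`, and it is
minimal: its kernel has coordinates in the ideal generated by the linear forms `l`. -/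
structure IsMinimalCover (l : List (𝒜 1)) (τ : ι → ℤ) (φ : (ι →₀ A) →ₗ[A] N.carrier) : Prop where
  map_mem : ∀ {j : ℤ} {f : ι →₀ A}, f ∈ (free 𝒜 τ).piece j → φ f ∈ N.piece j
  exists_preimage : ∀ {j : ℤ} {c : N.carrier}, c ∈ N.piece j → ∃ f ∈ (free 𝒜 τ).piece j, φ f = c
  coord_mem : ∀ {f : ι →₀ A}, φ f = 0 → ∀ k, f k ∈ linearIdeal l

namespace IsMinimalCover

variable {l : List (𝒜 1)} {S : Submodule A (ι →₀ A)}

theorem isShortExact (h : IsMinimalCover l τ φ) (hS : LinearMap.ker φ = S) :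
    IsShortExact 0 (L := (free 𝒜 τ).sub S) (M := free 𝒜 τ) S.subtype φ where
  injective := Subtype.val_injective
  comp_apply c := LinearMap.mem_ker.1 (hS ▸ c.2)
  left_mem {j c} hc := by
    rw [sub_zero] at hc
    exact hc
  right_mem := h.map_mem
  surjective := h.exists_preimage
  exact {j c} hc hφ := by
    rw [sub_zero]
    exact ⟨⟨c, hS ▸ LinearMap.mem_ker.2 hφ⟩, hc, rfl⟩

theorem nullAt (h : IsMinimalCover l τ φ) (hl : IsCoordinateSystem l)
    (hS : LinearMap.ker φ = S) (i j : ℤ) : ((h.isShortExact hS).koszul l).NullAt i j := by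
  obtain hi | rfl | hi := lt_trichotomy i 0
  · exact GrComplex.IsShortExact.nullAt_of_isExactAt_left _ (koszul_isExactAt_of_neg _ l hi _)
  · intro z hz _
    obtain ⟨b, hb, rfl⟩ := mem_koszul_piece_zero.1 hz
    rw [koszulMap_toKoszul]
    have hφb : φ b.1 = 0 := (h.isShortExact hS).comp_apply b
    exact (mem_zeroBoundaries_free ((h.isShortExact hS).left_mem hb)).2 (h.coord_mem hφb)
  · exact GrComplex.IsShortExact.nullAt_of_isExactAt_middle _ (free_isExactAt_of_pos hl hi j)

theorem isExactAt_zero_iff (h : IsMinimalCover l τ φ) (hl : IsCoordinateSystem l) {j : ℤ} :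
    (N.koszul l).IsExactAt 0 j ↔ ∀ k, τ k ≠ j := by
  rw [← free_isExactAt_zero_iff (𝒜 := 𝒜) (τ := τ) hl]
  have hses := (h.isShortExact rfl).koszul l
  have hright := hses.isExactAt_right (i := -1) (j := j)
    (koszul_isExactAt_of_neg _ l neg_one_lt_zero _)
  rw [neg_add_cancel] at hright
  exact ⟨hses.isExactAt_middle (h.nullAt hl rfl 0 j), hright⟩

theorem isExactAt_succ_iff (h : IsMinimalCover l τ φ) (hl : IsCoordinateSystem l)
    (hS : LinearMap.ker φ = S) {i j : ℤ} (hi : 0 ≤ i) :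
    (N.koszul l).IsExactAt (i + 1) j ↔ (((free 𝒜 τ).sub S).koszul l).IsExactAt i j := by
  have hses := (h.isShortExact hS).koszul l
  have hleft := hses.isExactAt_left (h.nullAt hl hS i j)
  have hright := hses.isExactAt_right (i := i) (j := j)
  rw [sub_zero] at hleft hright
  exact ⟨hleft, fun hL => hright hL (free_isExactAt_of_pos hl (by omega) j)⟩

end IsMinimalCover
end GrMod
end FreeCovers

section MinimalResolutions

theorem mem_smul_top_finsupp_iff {A ι : Type*} [CommRing A] {J : Ideal A} {f : ι →₀ A} :
    f ∈ J • (⊤ : Submodule A (ι →₀ A)) ↔ ∀ k, f k ∈ J := by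
  constructor
  · intro hf k
    refine Submodule.smul_induction_on hf (fun a ha g _ => ?_) fun g g' hg hg' => ?_
    · exact J.mul_mem_right _ ha
    · exact add_mem hg hg'
  · intro hf
    rw [← Finsupp.sum_single f]
    refine sum_mem fun k _ => ?_
    rw [← mul_one (f k), ← smul_eq_mul, ← Finsupp.smul_single]
    exact Submodule.smul_mem_smul (hf k) Submodule.mem_top

namespace MinGradedFreeRes

variable {K A : Type} [Field K] [CommRing A] [Algebra K A] {𝒜 : ℤ → Submodule K A}
  {𝔪 : Ideal A} {N : GrMod 𝒜} [Module K N.carrier]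
  {ℳ : ℤ → Submodule K N.carrier} {l : List (𝒜 1)} (R : MinGradedFreeRes K A 𝒜 𝔪 N.carrier ℳ)

theorem coord_mem_of_mem_range_d (h𝔪 : 𝔪 ≤ linearIdeal l) {i : ℕ} {f : R.ι i →₀ A}
    (hf : f ∈ LinearMap.range (R.d i)) (k : R.ι i) : f k ∈ linearIdeal l := by
  obtain ⟨g, rfl⟩ := hf
  exact h𝔪 (mem_smul_top_finsupp_iff.1 (R.minimal i g) k)

variable [GradedAlgebra 𝒜]

/-- The image of the differential `R.d i`, as a graded submodule. -/
noncomputable abbrev syzygies (i : ℕ) : GrMod 𝒜 :=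
  (GrMod.free 𝒜 (R.σ i)).sub (LinearMap.range (R.d i))

theorem isMinimalCover_rangeRestrict (h𝔪 : 𝔪 ≤ linearIdeal l) (i : ℕ) :
    GrMod.IsMinimalCover (N := R.syzygies i) l (R.σ (i + 1)) (R.d i).rangeRestrict where
  map_mem {j f} hf := R.graded_d i j f hf
  exists_preimage := by
    rintro j ⟨_, f, rfl⟩ hc
    obtain ⟨f', hf', hdf'⟩ :=
      GrMod.free_hasProjections.exists_mem_free_piece (R.graded_d i _ _) hc
    exact ⟨f', hf', Subtype.ext hdf'⟩
  coord_mem {f} hf := R.coord_mem_of_mem_range_d h𝔪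
    ((R.exact_d i f).1 (congrArg Subtype.val hf))

theorem isMinimalCover_ε (h𝔪 : 𝔪 ≤ linearIdeal l) (hN : N.HasProjections)
    (hℳ : ∀ j, ∀ c ∈ ℳ j, c ∈ N.piece j) : GrMod.IsMinimalCover l (R.σ 0) R.ε where
  map_mem {j f} hf := hℳ j _ (R.graded_ε j f hf)
  exists_preimage {j c} hc := by
    obtain ⟨f, rfl⟩ := R.surj c
    exact hN.exists_mem_free_piece (fun hf => hℳ _ _ (R.graded_ε _ _ hf)) hc
  coord_mem {f} hf := R.coord_mem_of_mem_range_d h𝔪 ((R.exact_ε f).1 hf)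

theorem syzygies_isExactAt_iff (hl : IsCoordinateSystem l) (h𝔪 : 𝔪 ≤ linearIdeal l)
    (q i : ℕ) (j : ℤ) :
    ((R.syzygies i).koszul l).IsExactAt q j ↔ ∀ k, R.σ (i + q + 1) k ≠ j := by
  induction q generalizing i with
  | zero => exact (R.isMinimalCover_rangeRestrict h𝔪 i).isExactAt_zero_iff hl
  | succ q ih =>
    have hker : LinearMap.ker (R.d i).rangeRestrict = LinearMap.range (R.d (i + 1)) := by
      rw [LinearMap.ker_rangeRestrict, (R.exact_d i).linearMap_ker_eq]
    rw [Nat.cast_succ, (R.isMinimalCover_rangeRestrict h𝔪 i).isExactAt_succ_iff hl hker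
      (Nat.cast_nonneg q), ih (i + 1), add_right_comm i 1 q, add_assoc i q 1]

/-- The Koszul homology of `N` in homological degree `q` counts the generators of the `q`-th module
of a minimal graded free resolution of `N`. -/
theorem isExactAt_iff (hl : IsCoordinateSystem l) (h𝔪 : 𝔪 ≤ linearIdeal l)
    (hN : N.HasProjections) (hℳ : ∀ j, ∀ c ∈ ℳ j, c ∈ N.piece j) (q : ℕ) (j : ℤ) :
    (N.koszul l).IsExactAt q j ↔ ∀ k, R.σ q k ≠ j := by
  have hε := R.isMinimalCover_ε h𝔪 hN hℳ
  cases q with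
  | zero => exact hε.isExactAt_zero_iff hl
  | succ q =>
    rw [Nat.cast_succ, hε.isExactAt_succ_iff hl R.exact_ε.linearMap_ker_eq (Nat.cast_nonneg q),
      R.syzygies_isExactAt_iff hl h𝔪, zero_add]

theorem sub_le_of_regLE (hl : IsCoordinateSystem l) (h𝔪 : 𝔪 ≤ linearIdeal l)
    (hN : N.HasProjections) (hℳ : ∀ j, ∀ c ∈ ℳ j, c ∈ N.piece j) {c : ℤ} (h : N.RegLE l c)
    (q : ℕ) (k : R.ι q) : R.σ q k - q ≤ c := by
  by_contra! hlt
  exact (R.isExactAt_iff hl h𝔪 hN hℳ q _).1 (h q _ hlt) k rfl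

theorem reg_eq_of_hasReg (hl : IsCoordinateSystem l) (h𝔪 : 𝔪 ≤ linearIdeal l)
    (hN : N.HasProjections) (hℳ : ∀ j, ∀ c ∈ ℳ j, c ∈ N.piece j) {c : ℤ} (h : N.HasReg l c) :
    R.reg = c := by
  refine IsGreatest.csSup_eq ⟨?_, ?_⟩
  · obtain ⟨i, hi⟩ := h.exists_not_isExactAt
    lift i to ℕ using not_lt.1 fun hneg => hi (GrMod.koszul_isExactAt_of_neg N l hneg _)
    rw [R.isExactAt_iff hl h𝔪 hN hℳ] at hi
    push Not at hi
    obtain ⟨k, hk⟩ := hi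
    exact ⟨i, k, by omega⟩
  · rintro x ⟨q, k, rfl⟩
    exact R.sub_le_of_regLE hl h𝔪 hN hℳ h.1 q k

theorem bddAbove_degrees (hl : IsCoordinateSystem l) (h𝔪 : 𝔪 ≤ linearIdeal l)
    (hN : N.HasProjections) (hℳ : ∀ j, ∀ c ∈ ℳ j, c ∈ N.piece j) :
    BddAbove {x : ℤ | ∃ (q : ℕ) (k : R.ι q), x = R.σ q k - (q : ℤ)} := by
  have hfinite : (⋃ q ∈ Set.Iic l.length, Set.range fun k => R.σ q k - (q : ℤ)).Finite :=
    (Set.finite_Iic _).biUnion fun q _ =>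
      have := R.fin q
      Set.finite_range _
  refine hfinite.bddAbove.mono ?_
  rintro x ⟨q, k, rfl⟩
  refine Set.mem_biUnion (Set.mem_Iic.2 ?_) ⟨k, rfl⟩
  by_contra! hq
  exact (R.isExactAt_iff hl h𝔪 hN hℳ q _).1
    (GrMod.koszul_isExactAt_of_length_lt N l (by exact_mod_cast hq) _) k rfl

theorem regLE_reg (hl : IsCoordinateSystem l) (h𝔪 : 𝔪 ≤ linearIdeal l)
    (hN : N.HasProjections) (hℳ : ∀ j, ∀ c ∈ ℳ j, c ∈ N.piece j) : N.RegLE l R.reg := by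
  intro i j hij
  obtain hi | hi := lt_or_ge i 0
  · exact GrMod.koszul_isExactAt_of_neg N l hi j
  lift i to ℕ using hi
  rw [R.isExactAt_iff hl h𝔪 hN hℳ]
  rintro k rfl
  exact hij.not_ge (le_csSup (R.bddAbove_degrees hl h𝔪 hN hℳ) ⟨i, k, rfl⟩)

end MinGradedFreeRes
end MinimalResolutions

section QuotientRings

variable {R A : Type*} [CommRing R] [CommRing A] [Algebra R A]

namespace GrMod

/-- The quotient ring `A ⧸ J` as a graded module: its pieces are the images of those of `A`. -/
abbrev quot (𝒜 : ℤ → Submodule R A) [GradedAlgebra 𝒜] (J : Ideal A) : GrMod 𝒜 where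
  carrier := A ⧸ J
  piece j := (𝒜 j).toAddSubgroup.map J.mkQ.toAddMonoidHom
  smul_mem := by
    rintro p j a _ ha ⟨c, hc, rfl⟩
    refine ⟨a * c, ?_, rfl⟩
    rw [add_comm]
    exact SetLike.mul_mem_graded ha hc

variable {𝒜 : ℤ → Submodule R A} [GradedAlgebra 𝒜] {J : Ideal A}

theorem quot_hasProjections (hJ : J.IsHomogeneous 𝒜) : (quot 𝒜 J).HasProjections := fun j =>
  ⟨QuotientAddGroup.map J.toAddSubgroup J.toAddSubgroup (GradedRing.proj 𝒜 j)
      fun _ ha => hJ j ha, by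
    rintro _ ⟨a, ha, rfl⟩
    exact congrArg J.mkQ (DirectSum.decompose_of_mem_same 𝒜 ha), by
    rintro i hij _ ⟨a, ha, rfl⟩
    exact congrArg J.mkQ (DirectSum.decompose_of_mem_ne 𝒜 ha hij)⟩

end GrMod
end QuotientRings

section ExistenceOfResolutions

theorem span_range_comp_succAbove {A M : Type*} [CommRing A] [AddCommGroup M] [Module A M] {p : ℕ}
    {g : Fin (p + 1) → M} {u : Fin (p + 1) → A} {k : Fin (p + 1)} (hu : IsUnit (u k))
    (h : ∑ i, u i • g i = 0) :
    Submodule.span A (Set.range (g ∘ k.succAbove)) = Submodule.span A (Set.range g) := by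
  refine le_antisymm (Submodule.span_mono (Set.range_comp_subset_range _ _))
    (Submodule.span_le.2 ?_)
  rintro _ ⟨i, rfl⟩
  obtain rfl | ⟨i, rfl⟩ := Fin.eq_self_or_eq_succAbove k i
  · rw [Fin.sum_univ_succAbove _ i] at h
    rw [SetLike.mem_coe, ← Submodule.smul_mem_iff_of_isUnit _ hu, eq_neg_of_add_eq_zero_left h]
    exact neg_mem (sum_mem fun i _ => Submodule.smul_mem _ _ (Submodule.subset_span ⟨i, rfl⟩))
  · exact Submodule.subset_span ⟨i, rfl⟩

namespace GrMod

variable {R A : Type*} [CommRing R] [CommRing A] [Algebra R A] {𝒜 : ℤ → Submodule R A}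

/-- `N` is generated by its homogeneous elements. -/
def IsHomogeneouslyGenerated (N : GrMod 𝒜) : Prop :=
  Submodule.span A (⋃ j, (N.piece j : Set N.carrier)) = ⊤

theorem IsHomogeneouslyGenerated.exists_fin {N : GrMod 𝒜} [Module.Finite A N.carrier]
    (hN : N.IsHomogeneouslyGenerated) :
    ∃ (p : ℕ) (g : Fin p → N.carrier) (τ : Fin p → ℤ),
      (∀ k, g k ∈ N.piece (τ k)) ∧ Submodule.span A (Set.range g) = ⊤ := by
  have hfg : (Submodule.span A (⋃ j, (N.piece j : Set N.carrier))).FG := hN ▸ Module.Finite.fg_top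
  obtain ⟨s, hs, hspan⟩ := Submodule.fg_span_iff_fg_span_finset_subset _ |>.1 hfg
  have hdeg k : ∃ j, (s.equivFin.symm k : N.carrier) ∈ N.piece j :=
    Set.mem_iUnion.1 (hs (s.equivFin.symm k).2)
  choose τ hτ using hdeg
  refine ⟨s.card, fun k => s.equivFin.symm k, τ, hτ, ?_⟩
  rw [← hN, hspan, ← Function.comp_def, s.equivFin.symm.surjective.range_comp,
    Subtype.range_coe]

variable [GradedAlgebra 𝒜]

theorem isHomogeneouslyGenerated_quot (J : Ideal A) :
    (quot 𝒜 J).IsHomogeneouslyGenerated := by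
  refine Submodule.eq_top_iff'.2 fun c => ?_
  obtain ⟨a, rfl⟩ := J.mkQ_surjective c
  rw [← mul_one a, ← smul_eq_mul, map_smul]
  exact Submodule.smul_mem _ _ (Submodule.subset_span
    (Set.mem_iUnion.2 ⟨0, 1, SetLike.one_mem_graded 𝒜, rfl⟩))

theorem isUnit_decompose_zero {l : List (𝒜 1)} (hl : IsCoordinateSystem l)
    (h0 : ∀ a ∈ 𝒜 0, a ≠ 0 → IsUnit a) {a : A} (ha : a ∉ linearIdeal l) :
    IsUnit (DirectSum.decompose 𝒜 a 0 : A) := by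
  classical
  refine h0 _ (SetLike.coe_mem _) fun hzero => ha ?_
  rw [← DirectSum.sum_support_decompose 𝒜 a]
  refine sum_mem fun z _ => ?_
  obtain rfl | hz := eq_or_ne z 0
  · exact hzero ▸ zero_mem _
  · exact hl.mem_of_ne_zero hz (SetLike.coe_mem _)

section Cover

variable {N : GrMod 𝒜} {l : List (𝒜 1)} {ι : Type*} {τ : ι → ℤ}

theorem linearCombination_mem_piece {g : ι → N.carrier} (hg : ∀ k, g k ∈ N.piece (τ k)) {j : ℤ}
    {f : ι →₀ A} (hf : f ∈ (free 𝒜 τ).piece j) :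
    Finsupp.linearCombination A g f ∈ N.piece j := by
  refine sum_mem fun k _ => ?_
  have := N.smul_mem (hf k) (hg k)
  rwa [add_sub_cancel] at this

theorem exists_isMinimalCover [Module.Finite A N.carrier] (hl : IsCoordinateSystem l)
    (h0 : ∀ a ∈ 𝒜 0, a ≠ 0 → IsUnit a) (hN : N.HasProjections)
    (hgen : N.IsHomogeneouslyGenerated) :
    ∃ (p : ℕ) (τ : Fin p → ℤ) (φ : (Fin p →₀ A) →ₗ[A] N.carrier),
      IsMinimalCover l τ φ ∧ Function.Surjective φ := by
  classical
  have hex := hgen.exists_fin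
  obtain ⟨g, τ, hg, hspan⟩ := Nat.find_spec hex
  have hmin := fun q => Nat.find_min hex (m := q)
  generalize Nat.find hex = p at g τ hg hspan hmin
  have hφ {j : ℤ} {f : Fin p →₀ A} (hf : f ∈ (free 𝒜 τ).piece j) :
      Finsupp.linearCombination A g f ∈ N.piece j := linearCombination_mem_piece hg hf
  have hsurj : Function.Surjective (Finsupp.linearCombination A g) := by
    rw [← LinearMap.range_eq_top, Finsupp.range_linearCombination, hspan]
  refine ⟨p, τ, Finsupp.linearCombination A g, ⟨hφ, fun {j c} hc => ?_, fun {f} hf k => ?_⟩, hsurj⟩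
  · obtain ⟨f, rfl⟩ := hsurj c
    exact hN.exists_mem_free_piece hφ hc
  by_contra hfk
  have hker := hN.freeProj_mem_ker hφ (τ k) (LinearMap.mem_ker.2 hf)
  have hunit : IsUnit (freeProj 𝒜 τ (τ k) f k) := by
    rw [freeProj_apply, sub_self]
    exact isUnit_decompose_zero hl h0 hfk
  obtain _ | p := p
  · exact k.elim0
  rw [LinearMap.mem_ker, Finsupp.linearCombination_apply,
    Finsupp.sum_fintype _ (fun i a => a • g i) fun i => zero_smul A (g i)] at hker
  refine hmin p p.lt_succ_self ⟨g ∘ k.succAbove, τ ∘ k.succAbove, fun i => hg _, ?_⟩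
  rw [span_range_comp_succAbove hunit hker, hspan]

theorem ker_hasProjections {φ : (ι →₀ A) →ₗ[A] N.carrier} (hφ : IsMinimalCover l τ φ)
    (hN : N.HasProjections) : ((free 𝒜 τ).sub (LinearMap.ker φ)).HasProjections := fun j =>
  ⟨((freeProj 𝒜 τ j).comp (LinearMap.ker φ).subtype.toAddMonoidHom).codRestrict (LinearMap.ker φ)
      fun f => hN.freeProj_mem_ker hφ.map_mem j f.2,
    fun _ hf => Subtype.ext (freeProj_of_mem hf),
    fun _ hij _ hf => Subtype.ext (freeProj_of_mem_ne hij hf)⟩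

theorem isHomogeneouslyGenerated_ker {φ : (ι →₀ A) →ₗ[A] N.carrier} (hφ : IsMinimalCover l τ φ)
    (hN : N.HasProjections) :
    ((free 𝒜 τ).sub (LinearMap.ker φ)).IsHomogeneouslyGenerated := by
  refine Submodule.eq_top_iff'.2 fun f => ?_
  obtain ⟨T, hT⟩ := exists_sum_freeProj_eq (𝒜 := 𝒜) (τ := τ) f.1
  have hsum : f = ∑ j ∈ T, ⟨freeProj 𝒜 τ j f.1, hN.freeProj_mem_ker hφ.map_mem j f.2⟩ :=
    Subtype.ext (by rw [Submodule.coe_sum, hT])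
  rw [hsum]
  exact sum_mem fun j _ => Submodule.subset_span (Set.mem_iUnion.2 ⟨j, freeProj_mem j f.1⟩)

end Cover
end GrMod

/-- A minimal free cover of finite rank of a graded module: one step in the construction of a
minimal graded free resolution. -/
structure FreeCover {R A : Type} [CommRing R] [CommRing A] [Algebra R A] {𝒜 : ℤ → Submodule R A}
    [GradedAlgebra 𝒜] (l : List (𝒜 1)) where
  target : GrMod.{0, 0, 0} 𝒜
  hasProjections : target.HasProjections
  rank : ℕ
  degree : Fin rank → ℤ
  map : (Fin rank →₀ A) →ₗ[A] target.carrier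
  isMinimalCover : GrMod.IsMinimalCover l degree map
  surjective : Function.Surjective map

namespace FreeCover

variable {R A : Type} [CommRing R] [CommRing A] [Algebra R A] {𝒜 : ℤ → Submodule R A}
  [GradedAlgebra 𝒜] {l : List (𝒜 1)}

theorem exists_target_eq (hl : IsCoordinateSystem l) (h0 : ∀ a ∈ 𝒜 0, a ≠ 0 → IsUnit a)
    (N : GrMod.{0, 0, 0} 𝒜) [Module.Finite A N.carrier] (hN : N.HasProjections)
    (hgen : N.IsHomogeneouslyGenerated) : ∃ c : FreeCover l, c.target = N := by
  obtain ⟨p, τ, φ, hφ, hsurj⟩ := GrMod.exists_isMinimalCover hl h0 hN hgen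
  exact ⟨⟨N, hN, p, τ, φ, hφ, hsurj⟩, rfl⟩

/-- `c'` continues the resolution begun by `c`: it covers the kernel of `c`, here expressed through
its composite `d` with the inclusion of that kernel. -/
structure IsContinuation (c c' : FreeCover l)
    (d : (Fin c'.rank →₀ A) →ₗ[A] (Fin c.rank →₀ A)) : Prop where
  range_eq : LinearMap.range d = LinearMap.ker c.map
  ker_eq : LinearMap.ker d = LinearMap.ker c'.map
  mem_piece : ∀ {j : ℤ} {f}, f ∈ (GrMod.free 𝒜 c'.degree).piece j →
    d f ∈ (GrMod.free 𝒜 c.degree).piece j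

theorem exists_isContinuation [IsNoetherianRing A] (hl : IsCoordinateSystem l)
    (h0 : ∀ a ∈ 𝒜 0, a ≠ 0 → IsUnit a) (c : FreeCover l) :
    ∃ c' : FreeCover l, ∃ d, IsContinuation c c' d := by
  obtain ⟨p, τ, φ, hφ, hsurj⟩ := GrMod.exists_isMinimalCover hl h0
    (GrMod.ker_hasProjections c.isMinimalCover c.hasProjections)
    (GrMod.isHomogeneouslyGenerated_ker c.isMinimalCover c.hasProjections)
  refine ⟨⟨_, GrMod.ker_hasProjections c.isMinimalCover c.hasProjections, p, τ, φ, hφ, hsurj⟩,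
    (LinearMap.ker c.map).subtype ∘ₗ φ, ?_, ?_, hφ.map_mem⟩
  · rw [LinearMap.range_comp_of_range_eq_top _ (LinearMap.range_eq_top.2 hsurj),
      Submodule.range_subtype]
  · exact LinearMap.ker_comp_of_ker_eq_bot _ (Submodule.ker_subtype _)

end FreeCover

namespace MinGradedFreeRes

variable {K A : Type} [Field K] [CommRing A] [Algebra K A] [IsNoetherianRing A]
  {𝒜 : ℤ → Submodule K A} [GradedAlgebra 𝒜] {𝔪 : Ideal A} {N : GrMod.{0, 0, 0} 𝒜}
  [Module K N.carrier] {ℳ : ℤ → Submodule K N.carrier} {l : List (𝒜 1)}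

theorem nonempty_of_isCoordinateSystem [Module.Finite A N.carrier] (hl : IsCoordinateSystem l)
    (h0 : ∀ a ∈ 𝒜 0, a ≠ 0 → IsUnit a) (h𝔪 : linearIdeal l ≤ 𝔪) (hN : N.HasProjections)
    (hgen : N.IsHomogeneouslyGenerated) (hℳ : ∀ j, ∀ c ∈ N.piece j, c ∈ ℳ j) :
    Nonempty (MinGradedFreeRes K A 𝒜 𝔪 N.carrier ℳ) := by
  obtain ⟨c₀, rfl⟩ := FreeCover.exists_target_eq hl h0 N hN hgen
  choose next d hd using FreeCover.exists_isContinuation (A := A) hl h0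
  let cover : ℕ → FreeCover l := Nat.rec c₀ fun _ => next
  refine ⟨{
    ι := fun i => Fin (cover i).rank
    fin := fun _ => inferInstance
    σ := fun i => (cover i).degree
    d := fun i => d (cover i)
    ε := c₀.map
    exact_d := fun i => LinearMap.exact_iff.2
      ((hd (cover i)).ker_eq.trans (hd (cover (i + 1))).range_eq.symm)
    exact_ε := LinearMap.exact_iff.2 (hd c₀).range_eq.symm
    surj := c₀.surjective
    graded_d := fun i _ _ hf => (hd (cover i)).mem_piece hf
    graded_ε := fun j _ hf => hℳ j _ (c₀.isMinimalCover.map_mem hf)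
    minimal := fun i f => mem_smul_top_finsupp_iff.2 fun k => h𝔪 ?_ }⟩
  refine (cover i).isMinimalCover.coord_mem ?_ k
  rw [← LinearMap.mem_ker, ← (hd (cover i)).range_eq]
  exact ⟨f, rfl⟩

end MinGradedFreeRes
end ExistenceOfResolutions

section DSequences

variable {A : Type*} [CommRing A] {n : ℕ}

/-- The ideal generated by the first `i` terms of the sequence `f`. -/
def initSpan (f : Fin n → A) (i : ℕ) : Ideal A :=
  Ideal.span (f '' {j | (j : ℕ) < i})

variable {f : Fin n → A}

theorem initSpan_zero : initSpan f 0 = ⊥ := by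
  simp only [initSpan, not_lt_zero, Set.ofPred_false, Set.image_empty, Ideal.span_empty]

theorem initSpan_of_le {i : ℕ} (hi : n ≤ i) : initSpan f i = Ideal.span (Set.range f) := by
  have huniv : {j : Fin n | (j : ℕ) < i} = Set.univ :=
    Set.eq_univ_of_forall fun j => j.2.trans_le hi
  rw [initSpan, huniv, Set.image_univ]

theorem initSpan_succ (i : Fin n) : initSpan f (i + 1) = initSpan f i ⊔ Ideal.span {f i} := by
  have hinsert : {j : Fin n | (j : ℕ) < i + 1} = {j : Fin n | (j : ℕ) < i} ∪ {i} :=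
    Set.ext fun j => Nat.lt_succ_iff_lt_or_eq.trans (or_congr_right Fin.ext_iff.symm)
  rw [initSpan, hinsert, Set.image_union, Ideal.span_union, Set.image_singleton, initSpan]

theorem span_range_eq_initSpan_sup {f : Fin (n + 1) → A} :
    Ideal.span (Set.range f) = initSpan f n ⊔ Ideal.span {f (Fin.last n)} := by
  rw [← initSpan_of_le le_rfl]
  exact initSpan_succ (Fin.last n)

theorem initSpan_le (i : ℕ) : initSpan f i ≤ Ideal.span (Set.range f) :=
  Ideal.span_mono (Set.image_subset_range _ _)

theorem initSpan_comp_castSucc {f : Fin (n + 1) → A} {i : ℕ} (hi : i ≤ n) :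
    initSpan (f ∘ Fin.castSucc) i = initSpan f i := by
  rw [initSpan, Set.image_comp, initSpan]
  congr 2
  ext j
  constructor
  · rintro ⟨j, hj, rfl⟩
    exact hj
  · intro hj
    exact ⟨⟨j, (Set.mem_ofPred.1 hj).trans_le hi⟩, hj, rfl⟩

namespace IsDSequence

theorem mem_of_mul_mem (hf : IsDSequence f) (i : Fin n) {x : A} (h : x * f i ∈ initSpan f i)
    (hx : x ∈ Ideal.span (Set.range f)) : x ∈ initSpan f i :=
  (hf i).le ⟨Ideal.mem_colon_span_singleton.2 h, hx⟩

theorem initSpan_inf_pow_le (hf : IsDSequence f) (s : ℕ) {i : ℕ} (hi : i ≤ n) :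
    initSpan f i ⊓ Ideal.span (Set.range f) ^ (s + 1) ≤
      initSpan f i * Ideal.span (Set.range f) ^ s := by
  induction s generalizing i with
  | zero =>
    rw [pow_zero, mul_one]
    exact inf_le_left
  | succ s ihs =>
    induction hi using Nat.decreasingInduction with
    | self =>
      rw [initSpan_of_le le_rfl, ← pow_succ']
      exact inf_le_right
    | of_succ i hi ih =>
      rintro y ⟨hyi, hy⟩
      lift i to Fin n using hi
      rw [initSpan_succ, Ideal.sup_mul] at ih
      obtain ⟨a, ha, b, hb, rfl⟩ := Submodule.mem_sup.1 (ih ⟨Ideal.mem_sup_left hyi, hy⟩)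
      obtain ⟨c, hc, rfl⟩ := Ideal.mem_span_singleton_mul.1 hb
      have hci : c * f i ∈ initSpan f i :=
        mul_comm c (f i) ▸ (Ideal.add_mem_iff_right _ (Ideal.mul_le_left ha)).1 hyi
      have hc' : c ∈ initSpan f i :=
        hf.mem_of_mul_mem i hci (Ideal.pow_le_self s.succ_ne_zero hc)
      refine add_mem ha ?_
      rw [pow_succ, ← mul_assoc, mul_comm (f i)]
      exact Ideal.mul_mem_mul (ihs i.2.le ⟨hc', hc⟩) Ideal.mem_span_range_self

theorem colon_sup_pow (hf : IsDSequence f) {i : Fin n}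
    (hreg : ∀ a, a * f i ∈ initSpan f i → a ∈ initSpan f i) (s : ℕ) :
    (initSpan f i ⊔ Ideal.span (Set.range f) ^ (s + 2)).colon {f i} =
      initSpan f i ⊔ Ideal.span (Set.range f) ^ (s + 1) := by
  ext x
  rw [Submodule.mem_colon_singleton, smul_eq_mul]
  constructor
  · intro h
    obtain ⟨a, ha, b, hb, hab⟩ := Submodule.mem_sup.1 h
    have hbi : b ∈ initSpan f (i + 1) := by
      rw [initSpan_succ, eq_sub_of_add_eq' hab]
      exact sub_mem (Ideal.mem_sup_right (Ideal.mem_span_singleton'.2 ⟨x, rfl⟩))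
        (Ideal.mem_sup_left ha)
    have hbmul := hf.initSpan_inf_pow_le (s + 1) i.2 ⟨hbi, hb⟩
    rw [initSpan_succ, Ideal.sup_mul] at hbmul
    obtain ⟨a', ha', b', hb', rfl⟩ := Submodule.mem_sup.1 hbmul
    obtain ⟨c, hc, rfl⟩ := Ideal.mem_span_singleton_mul.1 hb'
    have hxc : (x - c) * f i ∈ initSpan f i := by
      have : (x - c) * f i = a + a' := by linear_combination -hab
      rw [this]
      exact add_mem ha (Ideal.mul_le_left ha')
    rw [← sub_add_cancel x c]
    exact add_mem (Ideal.mem_sup_left (hreg _ hxc)) (Ideal.mem_sup_right hc)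
  · intro h
    have hmul := Ideal.mul_mem_mul h (Ideal.mem_span_range_self (f := f) (x := i))
    rw [Ideal.sup_mul, ← pow_succ] at hmul
    have hle : initSpan f i * Ideal.span (Set.range f) ⊔ Ideal.span (Set.range f) ^ (s + 2) ≤
        initSpan f i ⊔ Ideal.span (Set.range f) ^ (s + 2) :=
      sup_le_sup_right Ideal.mul_le_left _
    exact hle hmul

theorem colon_pow (hf : IsDSequence f) (i : Fin n) (s : ℕ) :
    (initSpan f i).colon {f i ^ (s + 1)} = (initSpan f i).colon {f i} := by
  induction s with
  | zero => rw [zero_add, pow_one]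
  | succ s ih =>
    rw [← ih]
    ext x
    rw [Submodule.mem_colon_singleton, Submodule.mem_colon_singleton, smul_eq_mul, smul_eq_mul,
      pow_succ _ (s + 1), ← mul_assoc]
    refine ⟨fun h => hf.mem_of_mul_mem i h ?_, Ideal.mul_mem_right _ _⟩
    exact Ideal.mul_mem_left _ _ (Ideal.pow_mem_of_mem _ Ideal.mem_span_range_self _ s.succ_pos)

end IsDSequence

theorem sup_span_singleton_pow (P : Ideal A) (g : A) (s : ℕ) :
    P ⊔ (P ⊔ Ideal.span {g}) ^ s = P ⊔ Ideal.span {g ^ s} := by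
  rw [← Ideal.comap_map_quotientMk, ← Ideal.comap_map_quotientMk, Ideal.map_pow,
    Ideal.map_comap_of_surjective _ Ideal.Quotient.mk_surjective, ← Ideal.map_pow,
    Ideal.span_singleton_pow, Ideal.comap_map_quotientMk]

end DSequences

section Regularities

variable {R A : Type*} [CommRing R] [CommRing A] [Algebra R A] {𝒜 : ℤ → Submodule R A}

namespace GrMod

theorem koszul_isExactAt_of_subsingleton (N : GrMod 𝒜) [Subsingleton N.carrier] (l : List (𝒜 1))
    (i j : ℤ) : (N.koszul l).IsExactAt i j := by
  have mem_zeroBoundaries (l : List (𝒜 1)) (j : ℤ) (b : N.carrier) : b ∈ N.zeroBoundaries l j :=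
    Subsingleton.elim 0 b ▸ zero_mem _
  obtain hi | rfl | hi := lt_trichotomy i 0
  · exact koszul_isExactAt_of_neg N l hi j
  · exact koszul_isExactAt_zero_iff.2 fun b _ => mem_zeroBoundaries l j b
  · exact koszul_isExactAt_of_pos N l (fun _ _ _ _ _ _ _ => mem_zeroBoundaries _ _ _) hi j

variable [GradedAlgebra 𝒜] {l : List (𝒜 1)}

theorem isMinimalCover_quot_bot (l : List (𝒜 1)) :
    IsMinimalCover (N := quot 𝒜 ⊥) l (fun _ : Unit => 0)
      ((⊥ : Ideal A).mkQ ∘ₗ Finsupp.lapply ()) where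
  map_mem {j f} hf := ⟨f (), sub_zero j ▸ hf (), rfl⟩
  exists_preimage := by
    rintro j _ ⟨a, ha, rfl⟩
    have hsingle : Finsupp.single () a () ∈ 𝒜 (j - 0) := by
      rw [Finsupp.single_eq_same, sub_zero]
      exact ha
    exact ⟨Finsupp.single () a, fun _ => hsingle, congrArg _ Finsupp.single_eq_same⟩
  coord_mem {f} hf k := by
    have hfk : f k = 0 := (Submodule.Quotient.mk_eq_zero ⊥).1 hf
    exact hfk ▸ zero_mem _

theorem hasReg_quot_bot (hl : IsCoordinateSystem l) : (quot 𝒜 ⊥).HasReg l 0 := by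
  have hcover := isMinimalCover_quot_bot l
  have hker : LinearMap.ker ((⊥ : Ideal A).mkQ ∘ₗ Finsupp.lapply ()) =
      (⊥ : Submodule A (Unit →₀ A)) :=
    LinearMap.ker_eq_bot'.2 fun f hf => Finsupp.ext fun k =>
      (Submodule.Quotient.mk_eq_zero ⊥).1 hf
  refine hasReg_of_not_isExactAt (fun i j hij => ?_) (sub_self 0) fun h =>
    (hcover.isExactAt_zero_iff hl).1 h () rfl
  obtain hi | rfl | hi := lt_trichotomy i 0
  · exact koszul_isExactAt_of_neg _ l hi j
  · exact (hcover.isExactAt_zero_iff hl).2 fun _ => by omega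
  · rw [← sub_add_cancel i 1, hcover.isExactAt_succ_iff hl hker (by omega)]
    exact koszul_isExactAt_of_subsingleton _ l _ j

/-- Multiplication by `g` as a map from `A ⧸ (P : g)` to `A ⧸ P`. -/
def colonMul (P : Ideal A) (g : A) : (A ⧸ P.colon {g}) →ₗ[A] A ⧸ P :=
  Submodule.mapQ _ _ (LinearMap.mulRight A g) fun _ ha => Submodule.mem_colon_singleton.1 ha

theorem isShortExact_colon {P : Ideal A} (hP : P.IsHomogeneous 𝒜) {e : ℤ} {g : A} (hg : g ∈ 𝒜 e) :
    IsShortExact e (L := quot 𝒜 (P.colon {g})) (M := quot 𝒜 P) (N := quot 𝒜 (P ⊔ Ideal.span {g}))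
      (colonMul P g) (Submodule.factor le_sup_left) where
  injective := by
    refine (injective_iff_map_eq_zero _).2 fun x hx => ?_
    obtain ⟨a, rfl⟩ := Submodule.mkQ_surjective _ x
    have ha : a * g ∈ P := (Submodule.Quotient.mk_eq_zero P).1 hx
    exact (Submodule.Quotient.mk_eq_zero _).2 (Submodule.mem_colon_singleton.2 ha)
  comp_apply x := by
    obtain ⟨a, rfl⟩ := Submodule.mkQ_surjective _ x
    exact (Submodule.Quotient.mk_eq_zero _).2
      (Ideal.mem_sup_right (Ideal.mem_span_singleton'.2 ⟨a, rfl⟩))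
  left_mem := by
    rintro j _ ⟨a, ha, rfl⟩
    have hag : a * g ∈ 𝒜 j := sub_add_cancel j e ▸ SetLike.mul_mem_graded ha hg
    exact ⟨a * g, hag, rfl⟩
  right_mem := by
    rintro j _ ⟨a, ha, rfl⟩
    exact ⟨a, ha, rfl⟩
  surjective := by
    rintro j _ ⟨a, ha, rfl⟩
    exact ⟨P.mkQ a, ⟨a, ha, rfl⟩, rfl⟩
  exact := by
    rintro j _ ⟨a, ha, rfl⟩ hφ
    obtain ⟨c, hc, hac⟩ := exists_sub_mul_mem_of_mem_sup_span hP hg ha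
      ((Submodule.Quotient.mk_eq_zero (P ⊔ Ideal.span {g})).1 hφ)
    exact ⟨(P.colon {g}).mkQ c, ⟨c, hc, rfl⟩, ((Submodule.Quotient.eq P).2 hac).symm⟩

end GrMod
end Regularities

section RegularityOfPowers

theorem IsRegSeq.colon_initSpan {A : Type*} [CommRing A] {n : ℕ} {f : Fin n → A} (hf : IsRegSeq f)
    (i : Fin n) : (initSpan f i).colon {f i} = initSpan f i :=
  Ideal.ext fun x => Submodule.mem_colon_singleton.trans ⟨hf.1 i x, Ideal.mul_mem_right _ _⟩

theorem IsRegSeq.mem_of_mul_mem_castSucc {A : Type*} [CommRing A] {n : ℕ} {f : Fin (n + 1) → A}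
    (hf : IsRegSeq (f ∘ Fin.castSucc)) (i : Fin n) {a : A} (h : a * f i.castSucc ∈ initSpan f i) :
    a ∈ initSpan f i := by
  have hinit := initSpan_comp_castSucc (f := f) i.2.le
  exact hinit.le (hf.1 i a (hinit.ge h))

theorem IsRegSeq.comp_castSucc {A : Type*} [CommRing A] {n : ℕ} {f : Fin (n + 1) → A}
    (hf : IsRegSeq f) : IsRegSeq (f ∘ Fin.castSucc) := by
  constructor
  · intro i a ha
    have hinit := initSpan_comp_castSucc (f := f) i.2.le
    exact hinit.ge (hf.1 i.castSucc a (hinit.le ha))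
  · exact ne_top_of_le_ne_top hf.2 (Ideal.span_mono (Set.range_comp_subset_range _ _))

variable {R A : Type*} [CommRing R] [CommRing A] [Algebra R A] {𝒜 : ℤ → Submodule R A}
  {n : ℕ}

theorem eq_zero_of_degree_eq_zero {f : Fin n → A} (hf : Ideal.span (Set.range f) ≠ ⊤)
    (h0 : ∀ a ∈ 𝒜 0, a ≠ 0 → IsUnit a) {d : Fin n → ℕ} (hfd : ∀ i, f i ∈ 𝒜 (d i)) {i : Fin n}
    (hi : d i = 0) : f i = 0 := by
  have hfi := hfd i
  rw [hi, Nat.cast_zero] at hfi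
  by_contra h
  exact hf (Ideal.eq_top_of_isUnit_mem _ Ideal.mem_span_range_self (h0 _ hfi h))

theorem IsRegSeq.degree_pos {f : Fin n → A} (hf : IsRegSeq f) {d : Fin n → ℕ}
    (hfd : ∀ i, f i ∈ 𝒜 (d i)) (h0 : ∀ a ∈ 𝒜 0, a ≠ 0 → IsUnit a) (i : Fin n) : 0 < d i := by
  by_contra! hdi
  have hfi : f i = 0 := eq_zero_of_degree_eq_zero hf.2 h0 hfd (Nat.le_zero.1 hdi)
  refine hf.2 ((Ideal.eq_top_iff_one _).2 (initSpan_le i (hf.1 i 1 ?_)))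
  rw [hfi, mul_zero]
  exact zero_mem _

variable [GradedAlgebra 𝒜]

theorem pow_isHomogeneous {I : Ideal A} (hI : I.IsHomogeneous 𝒜) (s : ℕ) :
    (I ^ s).IsHomogeneous 𝒜 := by
  induction s with
  | zero =>
    rw [pow_zero, Ideal.one_eq_top]
    exact Ideal.IsHomogeneous.top 𝒜
  | succ s ih => exact pow_succ I s ▸ ih.mul hI

theorem initSpan_isHomogeneous {f : Fin n → A} (hf : ∀ i, SetLike.IsHomogeneousElem 𝒜 (f i))
    (i : ℕ) : (initSpan f i).IsHomogeneous 𝒜 :=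
  Ideal.homogeneous_span 𝒜 _ (Set.forall_mem_image.2 fun j _ => hf j)

theorem span_range_isHomogeneous {f : Fin n → A} (hf : ∀ i, SetLike.IsHomogeneousElem 𝒜 (f i)) :
    (Ideal.span (Set.range f)).IsHomogeneous 𝒜 :=
  Ideal.homogeneous_span 𝒜 _ (Set.forall_mem_range.2 hf)

variable {l : List (𝒜 1)}

namespace GrMod

theorem hasReg_quot_of_isRegSeq (hl : IsCoordinateSystem l) (h0 : ∀ a ∈ 𝒜 0, a ≠ 0 → IsUnit a)
    {f : Fin n → A} (hf : IsRegSeq f) {d : Fin n → ℕ} (hfd : ∀ i, f i ∈ 𝒜 (d i)) :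
    (quot 𝒜 (initSpan f n)).HasReg l (∑ i, ((d i : ℤ) - 1)) := by
  induction n with
  | zero =>
    rw [initSpan_zero, Finset.univ_eq_empty, Finset.sum_empty]
    exact hasReg_quot_bot hl
  | succ n ih =>
    have hJ := ih hf.comp_castSucc fun i => hfd i.castSucc
    rw [initSpan_comp_castSucc le_rfl] at hJ
    have hpos := hf.degree_pos hfd h0 (Fin.last n)
    have hcolon := hf.colon_initSpan (Fin.last n)
    rw [Fin.val_last] at hcolon
    rw [initSpan_of_le le_rfl, span_range_eq_initSpan_sup, Fin.sum_univ_castSucc]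
    refine (isShortExact_colon (initSpan_isHomogeneous (fun i => ⟨_, hfd i⟩) n)
      (hfd (Fin.last n))).hasReg_right ?_ (hJ.1.mono (by omega))
    rwa [hcolon, add_assoc, sub_add_cancel, add_sub_cancel_right]

section AlmostCompleteIntersection

variable {f : Fin (n + 1) → A} {d : Fin (n + 1) → ℕ} {r c : ℤ}

theorem hasReg_quot_colon_last (hfd : ∀ i, f i ∈ 𝒜 (d i))
    (hJ : (quot 𝒜 (initSpan f n)).HasReg l r)
    (hI : (quot 𝒜 (Ideal.span (Set.range f))).RegLE l (r - 1)) :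
    (quot 𝒜 ((initSpan f n).colon {f (Fin.last n)})).HasReg l (r - d (Fin.last n)) := by
  refine (isShortExact_colon (initSpan_isHomogeneous (fun i => ⟨_, hfd i⟩) n)
    (hfd (Fin.last n))).hasReg_left hJ ?_
  rwa [← span_range_eq_initSpan_sup]

theorem hasReg_quot_initSpan_last_sup_pow (hf : IsDSequence f) (hfd : ∀ i, f i ∈ 𝒜 (d i))
    (hd : 0 < d (Fin.last n)) (hJ : (quot 𝒜 (initSpan f n)).HasReg l r)
    (hI : (quot 𝒜 (Ideal.span (Set.range f))).RegLE l (r - 1)) (s : ℕ) :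
    (quot 𝒜 (initSpan f n ⊔ Ideal.span (Set.range f) ^ (s + 2))).HasReg l
      (r + (s + 1) * d (Fin.last n) - 1) := by
  have hpow : f (Fin.last n) ^ (s + 2) ∈ 𝒜 ((s + 2 : ℕ) • (d (Fin.last n) : ℤ)) :=
    SetLike.pow_mem_graded _ (hfd _)
  rw [span_range_eq_initSpan_sup, sup_span_singleton_pow]
  refine (isShortExact_colon (initSpan_isHomogeneous (fun i => ⟨_, hfd i⟩) n) hpow).hasReg_right
    ?_ (hJ.1.mono ?_)
  · convert hasReg_quot_colon_last hfd hJ hI using 1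
    · exact congrArg (quot 𝒜) (hf.colon_pow (Fin.last n) (s + 1))
    · rw [nsmul_eq_mul]
      push_cast
      ring
  · have : (0 : ℤ) ≤ s * d (Fin.last n) := by positivity
    linarith

theorem hasReg_quot_initSpan_sup_pow_of_regLE (hf : IsDSequence f)
    (hreg : IsRegSeq (f ∘ Fin.castSucc)) (hfd : ∀ i, f i ∈ 𝒜 (d i)) {s : ℕ}
    (hlast : (quot 𝒜 (initSpan f n ⊔ Ideal.span (Set.range f) ^ (s + 2))).HasReg l c)
    (hs : ∀ i : Fin n, (quot 𝒜 (initSpan f i ⊔ Ideal.span (Set.range f) ^ (s + 1))).RegLE l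
      (c - d i.castSucc)) {i : ℕ} (hi : i ≤ n) :
    (quot 𝒜 (initSpan f i ⊔ Ideal.span (Set.range f) ^ (s + 2))).HasReg l c := by
  induction hi using Nat.decreasingInduction with
  | self => exact hlast
  | of_succ i hi ih =>
    lift i to Fin n using hi
    have hcolon := hf.colon_sup_pow (i := i.castSucc) (fun _ => hreg.mem_of_mul_mem_castSucc i) s
    have hsup : initSpan f (i + 1) ⊔ Ideal.span (Set.range f) ^ (s + 2) =
        initSpan f i ⊔ Ideal.span (Set.range f) ^ (s + 2) ⊔ Ideal.span {f i.castSucc} := by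
      rw [sup_right_comm]
      exact congrArg (· ⊔ _) (initSpan_succ i.castSucc)
    refine (isShortExact_colon (((initSpan_isHomogeneous (fun i => ⟨_, hfd i⟩) i).sup
      (pow_isHomogeneous (span_range_isHomogeneous fun i => ⟨_, hfd i⟩) (s + 2))))
      (hfd i.castSucc)).hasReg_middle ?_ ?_
    · exact hcolon ▸ hs i
    · exact hsup ▸ ih

theorem hasReg_quot_initSpan_sup_pow (hf : IsDSequence f)
    (hreg : IsRegSeq (f ∘ Fin.castSucc)) (hfd : ∀ i, f i ∈ 𝒜 (d i))
    (hd : 0 < d (Fin.last n)) (hmax : ∀ i, d i ≤ d (Fin.last n))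
    (hJ : (quot 𝒜 (initSpan f n)).HasReg l r)
    (hI : (quot 𝒜 (Ideal.span (Set.range f))).RegLE l (r - 1)) (s : ℕ) {i : ℕ} (hi : i ≤ n) :
    (quot 𝒜 (initSpan f i ⊔ Ideal.span (Set.range f) ^ (s + 2))).HasReg l
      (r + (s + 1) * d (Fin.last n) - 1) := by
  have hdeg (k : Fin n) : (d k.castSucc : ℤ) ≤ d (Fin.last n) := Nat.cast_le.2 (hmax k.castSucc)
  induction s generalizing i with
  | zero =>
    refine hasReg_quot_initSpan_sup_pow_of_regLE hf hreg hfd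
      (hasReg_quot_initSpan_last_sup_pow hf hfd hd hJ hI 0) (fun k => ?_) hi
    rw [zero_add, pow_one, sup_eq_right.2 (initSpan_le k)]
    exact hI.mono (by push_cast; linarith [hdeg k])
  | succ s ih =>
    refine hasReg_quot_initSpan_sup_pow_of_regLE hf hreg hfd
      (hasReg_quot_initSpan_last_sup_pow hf hfd hd hJ hI (s + 1)) (fun k => ?_) hi
    exact (ih k.2.le).1.mono (by push_cast; linarith [hdeg k])

end AlmostCompleteIntersection
end GrMod
end RegularityOfPowers

section PolynomialRings

variable {σ R : Type*} [CommRing R]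

theorem weight_one_int (m : σ →₀ ℕ) :
    Finsupp.weight (fun _ => (1 : ℤ)) m = Finsupp.weight (1 : σ → ℕ) m := by
  simp only [Finsupp.weight_apply, Finsupp.sum, nsmul_eq_mul, mul_one, Pi.one_apply, smul_eq_mul,
    Nat.cast_sum]

theorem zg_homogeneousSubmodule (σ R : Type*) [CommRing R] :
    zg (MvPolynomial.homogeneousSubmodule σ R) =
      MvPolynomial.weightedHomogeneousSubmodule R fun _ => (1 : ℤ) := by
  ext z p
  rw [MvPolynomial.mem_weightedHomogeneousSubmodule, MvPolynomial.IsWeightedHomogeneous]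
  simp only [weight_one_int]
  obtain hz | hz := lt_or_ge z 0
  · rw [zg, if_neg hz.not_ge, Submodule.mem_bot, MvPolynomial.eq_zero_iff]
    exact forall_congr' fun m => ⟨fun h hm => absurd h hm, fun h => by_contra fun hm => by
      have := h hm
      omega⟩
  · lift z to ℕ using hz
    rw [zg, if_pos (Nat.cast_nonneg z), Int.toNat_natCast]
    exact forall_congr' fun m => imp_congr_right fun _ => Nat.cast_inj.symm

noncomputable instance : GradedAlgebra (zg (MvPolynomial.homogeneousSubmodule σ R)) :=
  zg_homogeneousSubmodule σ R ▸ MvPolynomial.weightedGradedAlgebra R _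

theorem mem_zg_natCast {K A : Type*} [Semiring K] [AddCommMonoid A] [Module K A]
    {𝒜 : ℕ → Submodule K A} {z : ℕ} {a : A} : a ∈ zg 𝒜 z ↔ a ∈ 𝒜 z := by
  rw [zg, if_pos (Nat.cast_nonneg z), Int.toNat_natCast]

/-- The variables indexed by a list, as linear forms. -/
noncomputable def varList (R : Type*) [CommRing R] (s : List σ) :
    List (zg (MvPolynomial.homogeneousSubmodule σ R) 1) :=
  s.map fun i => ⟨MvPolynomial.X i, mem_zg_natCast.2 (MvPolynomial.isHomogeneous_X R i)⟩

theorem linearIdeal_varList (s : List σ) :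
    linearIdeal (varList R s) = Ideal.span (MvPolynomial.X '' {i | i ∈ s}) := by
  rw [linearIdeal, varList, List.map_map, Ideal.ofList]
  congr 1
  ext p
  exact List.mem_map

theorem mem_span_X_of_X_mul_mem {s : Set σ} {i : σ} (hi : i ∉ s) {p : MvPolynomial σ R}
    (h : MvPolynomial.X i * p ∈ Ideal.span (MvPolynomial.X '' s : Set (MvPolynomial σ R))) :
    p ∈ Ideal.span (MvPolynomial.X '' s : Set (MvPolynomial σ R)) := by
  rw [MvPolynomial.mem_ideal_span_X_image] at h ⊢
  intro m hm
  have hmi : Finsupp.single i 1 + m ∈ (MvPolynomial.X i * p).support := by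
    rwa [MvPolynomial.mem_support_iff, MvPolynomial.coeff_X_mul, ← MvPolynomial.mem_support_iff]
  obtain ⟨j, hj, hmj⟩ := h _ hmi
  have hij : i ≠ j := fun hij => hi (hij ▸ hj)
  rw [Finsupp.add_apply, Finsupp.single_eq_of_ne' hij, zero_add] at hmj
  exact ⟨j, hj, hmj⟩

theorem mem_linearIdeal_varList_of_ne_zero {s : List σ} (huniv : ∀ i, i ∈ s) {z : ℤ}
    {p : MvPolynomial σ R} (hz : z ≠ 0) (hp : p ∈ zg (MvPolynomial.homogeneousSubmodule σ R) z) :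
    p ∈ linearIdeal (varList R s) := by
  rw [linearIdeal_varList, MvPolynomial.mem_ideal_span_X_image]
  intro m hm
  rw [zg_homogeneousSubmodule, MvPolynomial.mem_weightedHomogeneousSubmodule] at hp
  have hm0 : m ≠ 0 := by
    rintro rfl
    exact hz ((hp (MvPolynomial.mem_support_iff.1 hm)).symm.trans (map_zero _))
  obtain ⟨i, hi⟩ := DFunLike.ne_iff.1 hm0
  exact ⟨i, huniv i, hi⟩

theorem isCoordinateSystem_varList [Nontrivial R] {s : List σ} (hs : s.Nodup)
    (huniv : ∀ i, i ∈ s) :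
    IsCoordinateSystem (varList R s) where
  mem_of_mul_mem y l hl a ha := by
    obtain ⟨t, ht, htl⟩ := List.suffix_map_iff.1 hl
    cases t with
    | nil => exact absurd htl (List.cons_ne_nil y l)
    | cons i t =>
      obtain ⟨rfl, rfl⟩ := List.cons_eq_cons.1 htl
      change a ∈ linearIdeal (varList R t)
      have hit : i ∉ t := (List.nodup_cons.1 (hs.sublist ht.sublist)).1
      rw [← varList, linearIdeal_varList] at ha
      rw [linearIdeal_varList]
      exact mem_span_X_of_X_mul_mem (s := {j | j ∈ t}) hit ha
  ne_top := by
    rw [linearIdeal_varList, Ideal.ne_top_iff_one, MvPolynomial.mem_ideal_span_X_image]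
    intro h
    have h1 : (0 : σ →₀ ℕ) ∈ (1 : MvPolynomial σ R).support := by
      rw [MvPolynomial.mem_support_iff, MvPolynomial.coeff_zero_one]
      exact one_ne_zero
    obtain ⟨i, -, hi⟩ := h 0 h1
    exact hi rfl
  mem_of_ne_zero := mem_linearIdeal_varList_of_ne_zero huniv

theorem linearIdeal_varList_eq_irrel {s : List σ} (huniv : ∀ i, i ∈ s) :
    linearIdeal (varList R s) = irrel (MvPolynomial.homogeneousSubmodule σ R) := by
  refine le_antisymm ?_ (Ideal.span_le.2 (Set.iUnion_subset fun k p hp => ?_))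
  · rw [linearIdeal_varList, Ideal.span_le]
    rintro _ ⟨i, -, rfl⟩
    exact Ideal.subset_span (Set.mem_iUnion.2 ⟨0, MvPolynomial.isHomogeneous_X R i⟩)
  · exact mem_linearIdeal_varList_of_ne_zero huniv (Nat.cast_ne_zero.2 k.succ_ne_zero)
      (mem_zg_natCast.2 hp)

theorem isUnit_of_mem_zg_zero {K : Type*} [Field K] {p : MvPolynomial σ K}
    (hp : p ∈ zg (MvPolynomial.homogeneousSubmodule σ K) 0) (h : p ≠ 0) : IsUnit p := by
  have hdeg := (MvPolynomial.totalDegree_zero_iff_isHomogeneous σ).2 (mem_zg_natCast.1 hp)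
  rw [MvPolynomial.totalDegree_eq_zero_iff_eq_C] at hdeg
  rw [hdeg] at h ⊢
  exact (isUnit_iff_ne_zero.2 fun h0 => h (by rw [h0, map_zero])).map MvPolynomial.C

end PolynomialRings

section MinimalResolutionsOfQuotients

variable {K A : Type} [Field K] [CommRing A] [Algebra K A] {𝒜 : ℕ → Submodule K A}
  [GradedAlgebra (zg 𝒜)] {l : List (zg 𝒜 1)} {𝔪 : Ideal A}

theorem MinGradedFreeRes.reg_eq_of_hasReg_quot (hl : IsCoordinateSystem l)
    (h𝔪 : 𝔪 ≤ linearIdeal l) {J : Ideal A} (hJ : J.IsHomogeneous (zg 𝒜))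
    (R : MinGradedFreeRes K A (zg 𝒜) 𝔪 (A ⧸ J) (quotPieces 𝒜 J)) {c : ℤ}
    (h : (GrMod.quot (zg 𝒜) J).HasReg l c) : R.reg = c :=
  reg_eq_of_hasReg (N := GrMod.quot (zg 𝒜) J) R hl h𝔪 (GrMod.quot_hasProjections hJ)
    (fun _ _ hc => hc) h

theorem GrMod.regLE_quot_of_forall_reg_lt [IsNoetherianRing A] (hl : IsCoordinateSystem l)
    (h0 : ∀ a ∈ zg 𝒜 0, a ≠ 0 → IsUnit a) (h𝔪 : linearIdeal l = 𝔪) {J : Ideal A}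
    (hJ : J.IsHomogeneous (zg 𝒜)) {c : ℤ}
    (hreg : ∀ R : MinGradedFreeRes K A (zg 𝒜) 𝔪 (A ⧸ J) (quotPieces 𝒜 J), R.reg < c) :
    (quot (zg 𝒜) J).RegLE l (c - 1) := by
  have hN : (quot (zg 𝒜) J).HasProjections := quot_hasProjections hJ
  obtain ⟨R⟩ := MinGradedFreeRes.nonempty_of_isCoordinateSystem (ℳ := quotPieces 𝒜 J) hl h0 h𝔪.le
    hN (isHomogeneouslyGenerated_quot J) fun _ _ hc => hc
  exact (R.regLE_reg hl h𝔪.ge hN fun _ _ hc => hc).mono (Int.le_sub_one_of_lt (hreg R))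

end MinimalResolutionsOfQuotients

section MainTheorem

theorem IsACI.ne_top {A : Type*} [CommRing A] {I : Ideal A} (h : IsACI I) : I ≠ ⊤ := by
  rintro rfl
  have hheight : idealHeight (⊤ : Ideal A) = ⊤ :=
    iInf₂_eq_top.2 fun p hp => absurd (top_le_iff.1 hp) p.2.ne_top
  have hgens := h.1
  rw [hheight, top_add] at hgens
  exact ENat.natCast_ne_top _ hgens

theorem degree_last_pos {R A : Type*} [CommRing R] [CommRing A] [Algebra R A]
    {𝒜 : ℤ → Submodule R A} [GradedAlgebra 𝒜] {l : List (𝒜 1)} {n : ℕ} {f : Fin (n + 1) → A}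
    {d : Fin (n + 1) → ℕ} {r : ℤ} (hf : Ideal.span (Set.range f) ≠ ⊤)
    (h0 : ∀ a ∈ 𝒜 0, a ≠ 0 → IsUnit a) (hfd : ∀ i, f i ∈ 𝒜 (d i))
    (hJ : (GrMod.quot 𝒜 (initSpan f n)).HasReg l r)
    (hI : (GrMod.quot 𝒜 (Ideal.span (Set.range f))).RegLE l (r - 1)) : 0 < d (Fin.last n) := by
  by_contra! hd
  have hlast : f (Fin.last n) = 0 := eq_zero_of_degree_eq_zero hf h0 hfd (Nat.le_zero.1 hd)
  rw [span_range_eq_initSpan_sup, hlast, Ideal.span_singleton_zero, sup_bot_eq] at hI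
  linarith [hJ.le_of_regLE hI]

theorem MinGradedFreeRes.reg_quot_initSpan_add_pow {K A : Type} [Field K] [CommRing A]
    [IsNoetherianRing A] [Algebra K A] {𝒜 : ℕ → Submodule K A} [GradedAlgebra (zg 𝒜)]
    {l : List (zg 𝒜 1)} (hl : IsCoordinateSystem l) (h0 : ∀ a ∈ zg 𝒜 0, a ≠ 0 → IsUnit a)
    {𝔪 : Ideal A} (h𝔪 : linearIdeal l = 𝔪) {n : ℕ} {d : Fin (n + 1) → ℕ} {f : Fin (n + 1) → A}
    (htop : Ideal.span (Set.range f) ≠ ⊤) (hfd : ∀ i, f i ∈ zg 𝒜 (d i)) (hf : IsDSequence f)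
    (hreg : IsRegSeq (f ∘ Fin.castSucc))
    (hI : ∀ R : MinGradedFreeRes K A (zg 𝒜) 𝔪 (A ⧸ Ideal.span (Set.range f))
      (quotPieces 𝒜 (Ideal.span (Set.range f))), R.reg < ∑ i : Fin n, (d i.castSucc : ℤ) - n)
    (hmax : ∀ i, d i ≤ d (Fin.last n)) (s : ℕ) {i : ℕ} (hi : i ≤ n)
    (R : MinGradedFreeRes K A (zg 𝒜) 𝔪 (A ⧸ (initSpan f i + Ideal.span (Set.range f) ^ (s + 2)))
      (quotPieces 𝒜 (initSpan f i + Ideal.span (Set.range f) ^ (s + 2)))) :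
    R.reg = ∑ i, (d i : ℤ) - (n + 1) + s * d (Fin.last n) := by
  have hfh (j : Fin (n + 1)) : SetLike.IsHomogeneousElem (zg 𝒜) (f j) := ⟨_, hfd j⟩
  have hIh : (Ideal.span (Set.range f)).IsHomogeneous (zg 𝒜) := span_range_isHomogeneous hfh
  have hsum : ∑ i : Fin n, ((d i.castSucc : ℤ) - 1) = ∑ i : Fin n, (d i.castSucc : ℤ) - n := by
    rw [Finset.sum_sub_distrib, Fin.sum_const, nsmul_one]
  have hJ := GrMod.hasReg_quot_of_isRegSeq hl h0 hreg fun j => hfd j.castSucc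
  rw [initSpan_comp_castSucc le_rfl, hsum] at hJ
  have hIreg := GrMod.regLE_quot_of_forall_reg_lt hl h0 h𝔪 hIh hI
  have hpow := GrMod.hasReg_quot_initSpan_sup_pow hf hreg hfd
    (degree_last_pos htop h0 hfd hJ hIreg) hmax hJ hIreg s hi
  rw [R.reg_eq_of_hasReg_quot hl h𝔪.ge ((initSpan_isHomogeneous hfh i).sup
    (pow_isHomogeneous hIh (s + 2))) hpow, Fin.sum_univ_castSucc]
  ring

theorem reg_powers_aci_general (K σ : Type) [Field K] [Finite σ] (n : ℕ)
    (d : Fin (n + 1) → ℕ) (f : Fin (n + 1) → MvPolynomial σ K)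
    (htop : Ideal.span (Set.range f) ≠ ⊤)
    (hhom : ∀ l, f l ∈ MvPolynomial.homogeneousSubmodule σ K (d l))
    (hd : IsDSequence f) (hrs : IsRegSeq (f ∘ Fin.castSucc))
    (hregI : ∀ RI : MinGradedFreeRes K (MvPolynomial σ K)
        (zg (MvPolynomial.homogeneousSubmodule σ K))
        (irrel (MvPolynomial.homogeneousSubmodule σ K))
        (MvPolynomial σ K ⧸ Ideal.span (Set.range f))
        (quotPieces (MvPolynomial.homogeneousSubmodule σ K) (Ideal.span (Set.range f))),
      RI.reg < (∑ l : Fin n, (d (Fin.castSucc l) : ℤ)) - (n : ℤ))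
    (hmax : ∀ l, d l ≤ d (Fin.last n)) (s : ℕ) (hs : 2 ≤ s) (i : ℕ) (hi : i ≤ n)
    (R : MinGradedFreeRes K (MvPolynomial σ K)
        (zg (MvPolynomial.homogeneousSubmodule σ K))
        (irrel (MvPolynomial.homogeneousSubmodule σ K))
        (MvPolynomial σ K ⧸ (Ideal.span (f '' {j | (j : ℕ) < i}) +
          Ideal.span (Set.range f) ^ s))
        (quotPieces (MvPolynomial.homogeneousSubmodule σ K)
          (Ideal.span (f '' {j | (j : ℕ) < i}) + Ideal.span (Set.range f) ^ s))) :
    R.reg = (∑ l, (d l : ℤ)) - ((n : ℤ) + 1) + ((s : ℤ) - 2) * (d (Fin.last n) : ℤ) := by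
  obtain ⟨_⟩ := nonempty_fintype σ
  obtain ⟨s, rfl⟩ := Nat.exists_eq_add_of_le' hs
  have huniv (i : σ) : i ∈ (Finset.univ : Finset σ).toList :=
    Finset.mem_toList.2 (Finset.mem_univ i)
  rw [Nat.cast_add, Nat.cast_ofNat, add_sub_cancel_right]
  exact MinGradedFreeRes.reg_quot_initSpan_add_pow
    (isCoordinateSystem_varList (Finset.nodup_toList _) huniv)
    (fun _ => isUnit_of_mem_zg_zero) (linearIdeal_varList_eq_irrel huniv) htop
    (fun l => mem_zg_natCast.2 (hhom l)) hd hrs hregI hmax s hi R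

end MainTheorem

/-- Theorem 2.4: let `I` be a homogeneous almost complete intersection in a standard graded
polynomial ring over an infinite field, generated by a homogeneous d-sequence
`f_1,…,f_n` (indexed here by `Fin (n+1)`, the paper's `n` being `n+1`) whose first terms
form a regular sequence, with `reg(A/I) < ∑_{l<n} d_l - n + 1` and `d_n` maximal.
Then for all `s ≥ 2` and all `i = 0,…,n-1`,
`reg (A/(⟨f_1,…,f_i⟩ + I^s)) = (∑ d_l) - n + (s-2) d_n`. -/
theorem reg_powers_aci (K : Type) [Field K] [Infinite K] (m n : ℕ)
    (d : Fin (n + 1) → ℕ) (f : Fin (n + 1) → MvPolynomial (Fin m) K)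
    (I : Ideal (MvPolynomial (Fin m) K)) (hACI : IsACI I)
    (hhom : ∀ l, f l ∈ MvPolynomial.homogeneousSubmodule (Fin m) K (d l))
    (hI : I = Ideal.span (Set.range f))
    (hd : IsDSequence f) (hrs : IsRegSeq (f ∘ Fin.castSucc))
    (hregI : ∀ RI : MinGradedFreeRes K (MvPolynomial (Fin m) K)
        (zg (MvPolynomial.homogeneousSubmodule (Fin m) K))
        (irrel (MvPolynomial.homogeneousSubmodule (Fin m) K))
        (MvPolynomial (Fin m) K ⧸ I)
        (quotPieces (MvPolynomial.homogeneousSubmodule (Fin m) K) I),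
      RI.reg < (∑ l : Fin n, (d (Fin.castSucc l) : ℤ)) - (n : ℤ))
    (hmax : ∀ l, d l ≤ d (Fin.last n)) :
    ∀ s : ℕ, 2 ≤ s → ∀ i : ℕ, i ≤ n →
    ∀ R : MinGradedFreeRes K (MvPolynomial (Fin m) K)
        (zg (MvPolynomial.homogeneousSubmodule (Fin m) K))
        (irrel (MvPolynomial.homogeneousSubmodule (Fin m) K))
        (MvPolynomial (Fin m) K ⧸ (Ideal.span (f '' {j | (j : ℕ) < i}) + I ^ s))
        (quotPieces (MvPolynomial.homogeneousSubmodule (Fin m) K) (Ideal.span (f '' {j | (j : ℕ) < i}) + I ^ s)),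
      R.reg = (∑ l, (d l : ℤ)) - ((n : ℤ) + 1) + ((s : ℤ) - 2) * (d (Fin.last n) : ℤ) := by
  subst hI
  exact reg_powers_aci_general K (Fin m) n d f hACI.ne_top hhom hd hrs hregI hmax
end

section
/- Let I be a homogeneous almost complete intersection ideal in a polynomial ring over an infinite field K, with height n. Then I admits a generating set of n + 1 homogeneous elements f_1, ..., f_{n+1} forming a d-sequence such that f_1, ..., f_n is a regular sequence. -/
open Ideal

attribute [local instance] MvPolynomial.gradedAlgebra

/-!
By unmixedness, in a Cohen–Macaulay standard graded algebra every associated prime of an ideal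
generated by a homogeneous regular sequence of length `n` has height at most `n`. For an almost
complete intersection `I` of height `n`, write `I = ⟨f_1, …, f_{n+1}⟩` with sufficiently general
homogeneous `f_1, …, f_n`: avoidance over the infinite field makes them a regular sequence which
generates `I_p` for each prime `p ⊇ I` of height `n`, since such an `I_p` needs at most `n`
generators. Here `p` is not the irrelevant ideal, as `I` itself would then need only `n` generators.

The only colon condition which is not part of regularity is that `(⟨f_1, …, f_n⟩ : f_{n+1}) ∩ I` is
`⟨f_1, …, f_n⟩`. If a homogeneous element `b` violated it, the annihilator of `b` modulo
`⟨f_1, …, f_n⟩` would contain `I` and lie in an associated prime `Q`. Then `Q` has height `n`, so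
`I_Q = ⟨f_1, …, f_n⟩_Q` and `b ∈ I` is annihilated modulo `⟨f_1, …, f_n⟩` by an element outside `Q`,
a contradiction.
-/

/-- The grade of `p` is at least its height: `p` contains a weakly regular sequence whose length is
at least the height of `p`. For the maximal ideal of a Noetherian local ring, or the irrelevant
ideal of a standard graded algebra, this says that the ring is Cohen–Macaulay. -/
def HeightLeGrade {A : Type*} [CommRing A] (p : Ideal A) : Prop :=
  ∃ xs : List A, (∀ x ∈ xs, x ∈ p) ∧ RingTheory.Sequence.IsWeaklyRegular A xs ∧
    p.height ≤ xs.length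

lemma height_add_coheight_le_height_maximalIdeal {R : Type*} [CommRing R] [IsLocalRing R]
    (Q : PrimeSpectrum R) :
    Order.height Q + Order.coheight Q ≤ (IsLocalRing.maximalIdeal R).height := by
  rw [← WithBot.coe_le_coe, IsLocalRing.maximalIdeal_height_eq_ringKrullDim, ringKrullDim,
    Order.krullDim_eq_iSup_height_add_coheight_of_nonempty]
  exact WithBot.coe_le_coe.2
    (le_iSup (fun P : PrimeSpectrum R => Order.height P + Order.coheight P) Q)

section LocalUnmixedness

open RingTheory.Sequence IsLocalRing CategoryTheory Abelian Pointwise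

universe u v

variable {R : Type u} [CommRing R] [IsLocalRing R] [IsNoetherianRing R]
  {M : Type v} [AddCommGroup M] [Module R M] [Module.Finite R M]

lemma torsionBySet_not_le_smul_top {x : R} (hx : x ∈ maximalIdeal R) (hreg : IsSMulRegular M x)
    {s : Set R} (hs : Submodule.torsionBySet R M s ≠ ⊥) :
    ¬ Submodule.torsionBySet R M s ≤ x • (⊤ : Submodule R M) := by
  intro hle
  refine hs (Submodule.eq_bot_of_le_smul_of_le_jacobson_bot (maximalIdeal R) _
    (IsNoetherian.noetherian _) (fun z hz => ?_) (maximalIdeal_le_jacobson _))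
  obtain ⟨w, -, rfl⟩ := hle hz
  refine Submodule.smul_mem_smul hx ((Submodule.mem_torsionBySet_iff _ _).2 fun r => hreg ?_)
  have hrw := (Submodule.mem_torsionBySet_iff _ _).1 hz r
  simpa only [DistribSMul.toLinearMap_apply, smul_zero, smul_comm x] using hrw

lemma exists_le_mem_associatedPrimes_quotSMulTop {x : R} (hx : x ∈ maximalIdeal R)
    (hreg : IsSMulRegular M x) {Q : Ideal R} (hQ : Q ∈ associatedPrimes R M) :
    ∃ P ∈ associatedPrimes R (QuotSMulTop x M), Q ≤ P ∧ x ∈ P := by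
  obtain ⟨hprime, y, hy⟩ := (isAssociatedPrime_iff ..).1 hQ
  have hy0 : y ≠ 0 := by
    rintro rfl
    exact hprime.ne_top (by simp [hy])
  have hyQ : y ∈ Submodule.torsionBySet R M Q := by
    rw [Submodule.mem_torsionBySet_iff]
    rintro ⟨r, hr⟩
    rwa [SetLike.mem_coe, hy, Submodule.mem_colon_singleton, Submodule.mem_bot] at hr
  obtain ⟨z, hzQ, hz⟩ := Set.not_subset.mp
    (torsionBySet_not_le_smul_top hx hreg ((Submodule.ne_bot_iff _).2 ⟨y, hyQ, hy0⟩))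
  have hz0 : (Submodule.Quotient.mk z : QuotSMulTop x M) ≠ 0 :=
    (Submodule.Quotient.mk_eq_zero _).not.2 hz
  obtain ⟨P, hP, hle⟩ := exists_le_isAssociatedPrime_of_isNoetherianRing R _ hz0
  refine ⟨P, hP, fun r hr => hle ?_, hle ?_⟩ <;>
    rw [Submodule.mem_colon_singleton, ← Submodule.Quotient.mk_smul, Submodule.mem_bot,
      Submodule.Quotient.mk_eq_zero]
  · rw [(Submodule.mem_torsionBySet_iff _ _).1 hzQ ⟨r, hr⟩]
    exact zero_mem _
  · exact Submodule.smul_mem_pointwise_smul _ _ _ trivial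

lemma length_le_coheight_of_mem_associatedPrimes {xs : List R}
    (hmem : ∀ x ∈ xs, x ∈ maximalIdeal R) (hxs : IsWeaklyRegular M xs) {Q : PrimeSpectrum R}
    (hQ : Q.asIdeal ∈ associatedPrimes R M) : (xs.length : ℕ∞) ≤ Order.coheight Q := by
  induction xs generalizing M Q with
  | nil => simp
  | cons x xs ih =>
    rw [List.forall_mem_cons] at hmem
    rw [isWeaklyRegular_cons_iff] at hxs
    obtain ⟨P, hP, hQP, hxP⟩ := exists_le_mem_associatedPrimes_quotSMulTop hmem.1 hxs.1 hQ
    have hxQ : x ∉ Q.asIdeal := fun hx => by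
      have : x ∈ ⋃ p ∈ associatedPrimes R M, (p : Set R) := Set.mem_biUnion hQ hx
      rw [biUnion_associatedPrimes_eq_compl_regular] at this
      exact this hxs.1
    have hlt : Q < ⟨P, IsAssociatedPrime.isPrime hP⟩ :=
      lt_of_le_not_ge hQP fun hPQ => hxQ (hPQ hxP)
    calc ((x :: xs).length : ℕ∞) = xs.length + 1 := by rw [List.length_cons, Nat.cast_succ]
      _ ≤ Order.coheight (⟨P, IsAssociatedPrime.isPrime hP⟩ : PrimeSpectrum R) + 1 := by
        gcongr
        exact ih hmem.2 hxs.2 hP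
      _ ≤ Order.coheight Q := Order.coheight_add_one_le hlt

lemma maximalIdeal_smul_top_lt_top [Nontrivial M] :
    maximalIdeal R • (⊤ : Submodule R M) < ⊤ := by
  refine lt_top_iff_ne_top.2 fun h => top_ne_bot (α := Submodule R M) ?_
  exact Submodule.eq_bot_of_le_smul_of_le_jacobson_bot _ _ (IsNoetherian.noetherian _) h.ge
    (maximalIdeal_le_jacobson _)

-- By Rees' theorem grade is detected by the vanishing of `Ext`, which passes to `M / xM` along the
-- long exact sequence with a shift by one.
lemma exists_isWeaklyRegular_quotSMulTop [Small.{v} R] [Nontrivial M] {x : R}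
    (hx : x ∈ maximalIdeal R) (hreg : IsSMulRegular M x) {xs : List R}
    (hmem : ∀ y ∈ xs, y ∈ maximalIdeal R) (hxs : IsWeaklyRegular M xs) :
    ∃ ys : List R, (∀ y ∈ ys, y ∈ maximalIdeal R) ∧ IsWeaklyRegular (QuotSMulTop x M) ys ∧
      xs.length ≤ ys.length + 1 := by
  have : Nontrivial (QuotSMulTop x M) := nontrivial_quotSMulTop_of_mem_maximalIdeal _ hx
  let k : ModuleCat.{v} R := ModuleCat.of R (Shrink.{v} (R ⧸ maximalIdeal R))
  have rees (N : Type v) [AddCommGroup N] [Module R N] [Module.Finite R N] [Nontrivial N] (n : ℕ) :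
      (∀ i < n, Subsingleton (Ext k (ModuleCat.of R N) i)) ↔
        ∃ rs : List R, rs.length = n ∧ (∀ r ∈ rs, r ∈ maximalIdeal R) ∧ IsRegular N rs :=
    (ModuleCat.exists_isRegular_tfae (maximalIdeal R) n (ModuleCat.of R N)
      maximalIdeal_smul_top_lt_top).out 1 3
  have hM : ∀ i < xs.length, Subsingleton (Ext k (ModuleCat.of R M) i) :=
    (rees M xs.length).2 ⟨xs, rfl, hmem, .of_isWeaklyRegular_of_mem_maximalIdeal _ hmem hxs⟩
  have hquot : ∀ i < xs.length - 1, Subsingleton (Ext k (ModuleCat.of R (QuotSMulTop x M)) i) := by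
    intro i hi
    have hzero : ∀ j < xs.length, Limits.IsZero (AddCommGrpCat.of (Ext k (ModuleCat.of R M) j)) :=
      fun j hj => AddCommGrpCat.isZero_of_iff_subsingleton.2 (hM j hj)
    exact AddCommGrpCat.subsingleton_of_isZero <| ShortComplex.Exact.isZero_of_both_zeros
      (Ext.covariant_sequence_exact₃' k
        (IsSMulRegular.smulShortComplex_shortExact (M := ModuleCat.of R M) hreg) i (i + 1) rfl)
      ((hzero i (by lia)).eq_zero_of_src _) ((hzero (i + 1) (by lia)).eq_zero_of_tgt _)
  obtain ⟨ys, hlen, hys, hysreg⟩ := (rees (QuotSMulTop x M) _).1 hquot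
  exact ⟨ys, hys, hysreg.toIsWeaklyRegular, by lia⟩

lemma length_le_length_add_coheight_of_mem_associatedPrimes [Small.{v} R] [Nontrivial M]
    {rs xs : List R} (hrsmem : ∀ r ∈ rs, r ∈ maximalIdeal R) (hrs : IsWeaklyRegular M rs)
    (hxsmem : ∀ x ∈ xs, x ∈ maximalIdeal R) (hxs : IsWeaklyRegular M xs) {Q : PrimeSpectrum R}
    (hQ : Q.asIdeal ∈ associatedPrimes R (M ⧸ (ofList rs • ⊤ : Submodule R M))) :
    (xs.length : ℕ∞) ≤ rs.length + Order.coheight Q := by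
  induction rs generalizing M xs with
  | nil =>
    rw [LinearEquiv.AssociatedPrimes.eq (Submodule.quotEquivOfEqBot _ (by simp))] at hQ
    simpa using length_le_coheight_of_mem_associatedPrimes hxsmem hxs hQ
  | cons r rs ih =>
    rw [List.forall_mem_cons] at hrsmem
    rw [isWeaklyRegular_cons_iff] at hrs
    have : Nontrivial (QuotSMulTop r M) := nontrivial_quotSMulTop_of_mem_maximalIdeal _ hrsmem.1
    obtain ⟨ys, hysmem, hys, hlen⟩ :=
      exists_isWeaklyRegular_quotSMulTop hrsmem.1 hrs.1 hxsmem hxs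
    rw [LinearEquiv.AssociatedPrimes.eq
      (Submodule.quotOfListConsSMulTopEquivQuotSMulTopInner M r rs)] at hQ
    calc (xs.length : ℕ∞) ≤ ys.length + 1 := by exact_mod_cast hlen
      _ ≤ rs.length + Order.coheight Q + 1 := by
        gcongr
        exact ih hrsmem.2 hrs.2 hysmem hys hQ
      _ = (r :: rs).length + Order.coheight Q := by
        rw [List.length_cons, Nat.cast_succ, add_right_comm]

theorem HeightLeGrade.height_le_length_of_mem_associatedPrimes
    (hR : HeightLeGrade (maximalIdeal R)) {rs : List R} (hmem : ∀ r ∈ rs, r ∈ maximalIdeal R)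
    (hrs : IsWeaklyRegular R rs) {Q : Ideal R} (hQ : Q ∈ associatedPrimes R (R ⧸ ofList rs)) :
    Q.height ≤ rs.length := by
  obtain ⟨xs, hxsmem, hxs, hlen⟩ := hR
  let P : PrimeSpectrum R := ⟨Q, IsAssociatedPrime.isPrime hQ⟩
  have hP : P.asIdeal ∈ associatedPrimes R (R ⧸ (ofList rs • ⊤ : Ideal R)) := by
    rwa [smul_eq_mul, Ideal.mul_top]
  have hsum : Order.height P + Order.coheight P ≤ rs.length + Order.coheight P :=
    (height_add_coheight_le_height_maximalIdeal P).trans <| hlen.trans <|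
      length_le_length_add_coheight_of_mem_associatedPrimes hmem hrs hxsmem hxs hP
  have hfin : Order.coheight P ≠ ⊤ := ne_top_of_le_ne_top (ENat.natCast_ne_top xs.length) <|
    le_add_self.trans ((height_add_coheight_le_height_maximalIdeal P).trans hlen)
  exact (PrimeSpectrum.height_eq_orderHeight P).trans_le
    ((ENat.add_le_add_iff_right hfin).1 hsum)

end LocalUnmixedness

lemma HeightLeGrade.maximalIdeal_localization {A : Type*} [CommRing A] {p : Ideal A} [p.IsPrime]
    (hp : HeightLeGrade p) :
    HeightLeGrade (IsLocalRing.maximalIdeal (Localization.AtPrime p)) := by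
  obtain ⟨xs, hmem, hxs, hlen⟩ := hp
  refine ⟨xs.map (algebraMap A _), ?_, hxs.of_isLocalization _ p.primeCompl, ?_⟩
  · simpa only [List.forall_mem_map, IsLocalization.AtPrime.to_map_mem_maximal_iff _ p] using hmem
  · rwa [List.length_map, ← IsLocalization.height_under p.primeCompl,
      IsLocalization.AtPrime.under_maximalIdeal _ p]

theorem HeightLeGrade.height_comap_le_length_of_mem_associatedPrimes {A : Type*} [CommRing A]
    [IsNoetherianRing A] {p : Ideal A} [p.IsPrime] (hp : HeightLeGrade p) {T : List A}
    (hmem : ∀ t ∈ T, t ∈ p) (hT : RingTheory.Sequence.IsWeaklyRegular A T)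
    {Q : Ideal (Localization.AtPrime p)}
    (hQ : Q ∈ associatedPrimes (Localization.AtPrime p)
      (Localization.AtPrime p ⧸ (ofList T).map (algebraMap A (Localization.AtPrime p)))) :
    (Q.comap (algebraMap A (Localization.AtPrime p))).height ≤ T.length := by
  rw [Ideal.map_ofList] at hQ
  have hmem' : ∀ t ∈ T.map (algebraMap A (Localization.AtPrime p)),
      t ∈ IsLocalRing.maximalIdeal (Localization.AtPrime p) :=
    List.forall_mem_map.2 fun t ht =>
      (IsLocalization.AtPrime.to_map_mem_maximal_iff _ p t).2 (hmem t ht)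
  have := IsAssociatedPrime.isPrime hQ
  have hheight := hp.maximalIdeal_localization.height_le_length_of_mem_associatedPrimes hmem'
    (hT.of_isLocalization _ p.primeCompl) hQ
  rwa [List.length_map, ← IsLocalization.height_under p.primeCompl] at hheight

/-- `N` is generated by at most `r` elements modulo its submodule `T`. -/
def IsGeneratedModulo {R M : Type*} [Semiring R] [AddCommMonoid M] [Module R M]
    (T N : Submodule R M) (r : ℕ) : Prop :=
  ∃ s : Finset M, s.card ≤ r ∧ N = T ⊔ Submodule.span R s

namespace IsGeneratedModulo

lemma eq_of_zero {R M : Type*} [Semiring R] [AddCommMonoid M] [Module R M] {T N : Submodule R M}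
    (h : IsGeneratedModulo T N 0) : N = T := by
  obtain ⟨s, hcard, hN⟩ := h
  rw [Finset.card_eq_zero.1 (Nat.le_zero.1 hcard)] at hN
  simpa using hN

variable {R M : Type*} [CommRing R] [IsLocalRing R] [AddCommGroup M] [Module R M]
  {T N : Submodule R M} {r : ℕ}

open IsLocalRing

theorem sup_span_singleton (h : IsGeneratedModulo T N (r + 1)) {x : M} (hxN : x ∈ N)
    (hx : x ∉ T ⊔ maximalIdeal R • N) : IsGeneratedModulo (T ⊔ Submodule.span R {x}) N r := by
  classical
  obtain ⟨s, hcard, hN⟩ := h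
  have hTN : T ≤ N := hN ▸ le_sup_left
  have hsN : ∀ a ∈ s, a ∈ N := fun a ha =>
    hN ▸ Submodule.mem_sup_right (Submodule.subset_span ha)
  obtain ⟨t, ht, w, hw, hsum⟩ := Submodule.mem_sup.1 (hN ▸ hxN)
  obtain ⟨c, -, rfl⟩ := Submodule.mem_span_finset.1 hw
  obtain ⟨y, hys, hy⟩ : ∃ y ∈ s, IsUnit (c y) := by
    by_contra! hc
    rw [← hsum] at hx
    exact hx (add_mem (Submodule.mem_sup_left ht) (Submodule.mem_sup_right
      (sum_mem fun a ha => Submodule.smul_mem_smul (hc a ha) (hsN a ha))))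
  set B := T ⊔ Submodule.span R {x} ⊔ Submodule.span R (s.erase y : Set M)
  have hTB : T ≤ B := le_sup_left.trans le_sup_left
  have herase : ∀ a ∈ s.erase y, a ∈ B := fun a ha =>
    Submodule.mem_sup_right (Submodule.subset_span ha)
  have hyB : y ∈ B := by
    rw [← Submodule.smul_mem_iff_of_isUnit B hy,
      ← add_sub_cancel_right (c y • y) (∑ a ∈ s.erase y, c a • a),
      Finset.add_sum_erase s (fun a => c a • a) hys, eq_sub_of_add_eq' hsum]
    refine sub_mem (sub_mem ?_ (hTB ht)) (sum_mem fun a ha => B.smul_mem _ (herase a ha))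
    exact Submodule.mem_sup_left (Submodule.mem_sup_right (Submodule.mem_span_singleton_self x))
  refine ⟨s.erase y, by rw [Finset.card_erase_of_mem hys]; lia, le_antisymm ?_ ?_⟩
  · rw [hN]
    refine sup_le hTB (Submodule.span_le.2 fun a ha => ?_)
    by_cases hay : a = y
    · rwa [hay]
    · exact herase a (Finset.mem_erase.2 ⟨hay, ha⟩)
  · refine sup_le (sup_le hTN ((Submodule.span_singleton_le_iff_mem _ _).2 hxN)) ?_
    exact Submodule.span_le.2 fun a ha => hsN a (Finset.mem_of_mem_erase ha)

theorem exists_finset_subset (h : IsGeneratedModulo T N r) (hfg : N.FG) {S : Set M}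
    (hS : N = T ⊔ Submodule.span R S) :
    ∃ s : Finset M, ↑s ⊆ S ∧ s.card ≤ r ∧ N = T ⊔ Submodule.span R s := by
  classical
  induction r generalizing T with
  | zero => exact ⟨∅, by simp, le_rfl, by simpa using h.eq_of_zero⟩
  | succ r ih =>
    by_cases hle : S ⊆ (T ⊔ maximalIdeal R • N : Submodule R M)
    · have hNT : N ≤ T := Submodule.le_of_le_smul_of_le_jacobson_bot hfg
        (maximalIdeal_le_jacobson _) (hS.trans_le (sup_le le_sup_left (Submodule.span_le.2 hle)))
      exact ⟨∅, by simp, by simp, by simpa using hNT.antisymm (hS ▸ le_sup_left)⟩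
    · obtain ⟨x, hxS, hx⟩ := Set.not_subset.1 hle
      have hspan : Submodule.span R {x} ≤ Submodule.span R S :=
        Submodule.span_mono (Set.singleton_subset_iff.2 hxS)
      have hxN : x ∈ N := hS ▸ Submodule.mem_sup_right (Submodule.subset_span hxS)
      obtain ⟨s, hsS, hcard, hN⟩ := ih (h.sup_span_singleton hxN hx)
        (by rw [sup_assoc, sup_eq_right.2 hspan, hS])
      refine ⟨insert x s, ?_, (Finset.card_insert_le x s).trans (by lia), ?_⟩
      · rw [Finset.coe_insert]
        exact Set.insert_subset hxS hsS
      · rw [Finset.coe_insert, Submodule.span_insert, ← sup_assoc, ← hN]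

end IsGeneratedModulo

lemma IsGeneratedModulo.map {A B : Type*} [CommRing A] [CommRing B] {J I : Ideal A} {r : ℕ}
    (h : IsGeneratedModulo J I r) (φ : A →+* B) : IsGeneratedModulo (J.map φ) (I.map φ) r := by
  classical
  obtain ⟨s, hcard, hs⟩ := h
  refine ⟨s.image φ, Finset.card_image_le.trans hcard, ?_⟩
  rw [hs, Ideal.map_sup, Ideal.submodule_span_eq, Ideal.map_span, Finset.coe_image,
    Ideal.submodule_span_eq]

section Residual

variable {A : Type*} [CommRing A]

lemma height_le_length_of_mem_minimalPrimes_ofList [IsNoetherianRing A] {T : List A} {Q : Ideal A}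
    (hQ : Q ∈ (ofList T).minimalPrimes) : Q.height ≤ T.length := by
  classical
  rw [ofList, ← List.coe_toFinset] at hQ
  exact (height_le_card_of_mem_minimalPrimes_span_finset hQ).trans
    (mod_cast T.toFinset_card_le)

lemma not_map_le_map_ofList [IsNoetherianRing A] {T : List A} {I p : Ideal A} [p.IsPrime]
    (hTp : ofList T ≤ p) (hlen : T.length < I.height) :
    ¬ I.map (algebraMap A (Localization.AtPrime p)) ≤
      (ofList T).map (algebraMap A (Localization.AtPrime p)) := by
  intro hle
  obtain ⟨Q, hQ, hQp⟩ := Ideal.exists_minimalPrimes_le hTp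
  have hprime := hQ.1.1
  have hIQ : I ≤ Q := fun a ha => by
    obtain ⟨c, hc, hca⟩ := (IsLocalization.algebraMap_mem_map_algebraMap_iff
      p.primeCompl _ _ _).1 (hle (Ideal.mem_map_of_mem _ ha))
    exact (hprime.mem_or_mem (hQ.1.2 hca)).resolve_left fun h => hc (hQp h)
  exact (hlen.trans_le (Ideal.height_mono hIQ)).not_ge
    (height_le_length_of_mem_minimalPrimes_ofList hQ)

/-- The contraction to `A` of `J_p + pI_p`. By Nakayama's lemma, the elements of `I` outside it
are those that belong to a minimal system of generators of `I_p` modulo `J_p`. -/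
noncomputable def residualIdeal (J I p : Ideal A) [p.IsPrime] : Ideal A :=
  (J.map (algebraMap A (Localization.AtPrime p)) ⊔
    IsLocalRing.maximalIdeal (Localization.AtPrime p) •
      I.map (algebraMap A (Localization.AtPrime p))).comap
    (algebraMap A (Localization.AtPrime p))

variable {J I p : Ideal A} [p.IsPrime]

lemma le_residualIdeal : J ≤ residualIdeal J I p :=
  Ideal.map_le_iff_le_comap.1 le_sup_left

lemma mem_residualIdeal_of_mul_mem {l a : A} (hl : l ∉ p) (h : l * a ∈ residualIdeal J I p) :
    a ∈ residualIdeal J I p := by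
  rw [residualIdeal, Ideal.mem_comap, map_mul] at h
  have hunit : IsUnit (algebraMap A (Localization.AtPrime p) l) :=
    IsLocalization.map_units _ (⟨l, hl⟩ : p.primeCompl)
  exact (Ideal.unit_mul_mem_iff_mem _ hunit).1 h

lemma not_le_residualIdeal (hfg : I.FG)
    (h : ¬ I.map (algebraMap A (Localization.AtPrime p)) ≤
      J.map (algebraMap A (Localization.AtPrime p))) :
    ¬ I ≤ residualIdeal J I p := fun hle =>
  h (Submodule.le_of_le_smul_of_le_jacobson_bot (hfg.map _)
    (IsLocalRing.maximalIdeal_le_jacobson _) (Ideal.map_le_iff_le_comap.2 hle))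

lemma IsGeneratedModulo.map_sup_span_singleton {r : ℕ}
    (h : IsGeneratedModulo (J.map (algebraMap A (Localization.AtPrime p)))
      (I.map (algebraMap A (Localization.AtPrime p))) (r + 1))
    {x : A} (hxI : x ∈ I) (hx : x ∉ residualIdeal J I p) :
    IsGeneratedModulo ((J ⊔ span {x}).map (algebraMap A (Localization.AtPrime p)))
      (I.map (algebraMap A (Localization.AtPrime p))) r := by
  rw [Ideal.map_sup, Ideal.map_span, Set.image_singleton]
  exact h.sup_span_singleton (Ideal.mem_map_of_mem _ hxI) hx

end Residual

section FinSequence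

lemma snoc_image_lt_castSucc {α : Type*} {n : ℕ} (x : Fin n → α) (g : α) (i : Fin n) :
    (Fin.snoc x g : Fin (n + 1) → α) '' {j | j < i.castSucc} = x '' {j | j < i} := by
  ext y
  simp [Fin.exists_fin_succ', Fin.castSucc_lt_castSucc_iff, (Fin.castSucc_lt_last i).not_gt]

lemma snoc_image_lt_last {α : Type*} {n : ℕ} (x : Fin n → α) (g : α) :
    (Fin.snoc x g : Fin (n + 1) → α) '' {j | j < Fin.last n} = Set.range x := by
  ext y
  simp [Fin.exists_fin_succ', Fin.castSucc_lt_last]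

variable {A : Type*} [CommRing A] {n : ℕ}

lemma ofList_take_ofFn (f : Fin n → A) (i : Fin n) :
    ofList ((List.ofFn f).take i) = span (f '' {j | j < i}) := by
  rw [ofList]
  congr 1
  ext y
  simp only [Set.mem_ofPred_eq, List.mem_take_iff_getElem, Set.mem_image, List.getElem_ofFn]
  constructor
  · rintro ⟨j, hj, rfl⟩
    exact ⟨_, (lt_min_iff.1 hj).1, rfl⟩
  · rintro ⟨j, hj, rfl⟩
    exact ⟨j, lt_min hj (by simp), rfl⟩

lemma isWeaklyRegular_ofFn_iff {f : Fin n → A} :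
    RingTheory.Sequence.IsWeaklyRegular A (List.ofFn f) ↔
      ∀ i a, a * f i ∈ span (f '' {j | j < i}) → a ∈ span (f '' {j | j < i}) := by
  rw [RingTheory.Sequence.isWeaklyRegular_iff]
  simp only [isSMulRegular_quotient_iff_mem_of_smul_mem, smul_eq_mul, Ideal.mul_top,
    List.getElem_ofFn, mul_comm (f _)]
  constructor
  · intro h i
    have := h i (by simp)
    rwa [ofList_take_ofFn] at this
  · intro h i hi
    have := h ⟨i, by simpa using hi⟩
    rwa [← ofList_take_ofFn] at this

lemma isRegSeq_iff {f : Fin n → A} :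
    IsRegSeq f ↔
      RingTheory.Sequence.IsWeaklyRegular A (List.ofFn f) ∧ span (Set.range f) ≠ ⊤ :=
  and_congr_left' isWeaklyRegular_ofFn_iff.symm

lemma isDSequence_iff {f : Fin n → A} :
    IsDSequence f ↔ ∀ i, ∀ a ∈ span (Set.range f), a * f i ∈ span (f '' {j | j < i}) →
      a ∈ span (f '' {j | j < i}) := by
  refine forall_congr' fun i => ⟨fun h a ha hai => ?_, fun h => le_antisymm ?_ ?_⟩
  · exact h.le ⟨Ideal.mem_colon_span_singleton.2 hai, ha⟩
  · exact fun a ha => h a ha.2 (Ideal.mem_colon_span_singleton.1 ha.1)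
  · exact fun a ha => ⟨Ideal.mem_colon_span_singleton.2 (Ideal.mul_mem_right _ _ ha),
      span_mono (Set.image_subset_range _ _) ha⟩

lemma isDSequence_snoc {x : Fin n → A} {g : A}
    (hx : RingTheory.Sequence.IsWeaklyRegular A (List.ofFn x))
    (hg : ∀ a ∈ span (Set.range x) ⊔ span {g}, a * g ∈ span (Set.range x) →
      a ∈ span (Set.range x)) :
    IsDSequence (Fin.snoc x g : Fin (n + 1) → A) := by
  rw [isDSequence_iff, Fin.forall_fin_succ']
  simp only [Fin.snoc_castSucc, Fin.snoc_last, snoc_image_lt_castSucc, snoc_image_lt_last,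
    Fin.range_snoc, Ideal.span_insert, sup_comm (span {g})]
  exact ⟨fun i a _ => isWeaklyRegular_ofFn_iff.1 hx i a, hg⟩

end FinSequence

section Invariants

variable {A : Type*} [CommRing A] {I : Ideal A} {r : ℕ}

lemma idealHeight_eq_height (I : Ideal A) : idealHeight I = I.height := by
  simp only [idealHeight, ← PrimeSpectrum.height_eq_orderHeight]
  refine le_antisymm ?_ (le_iInf₂ fun p hp => Ideal.height_mono hp)
  rw [Ideal.height_eq_inf_minimalPrimes]
  exact le_iInf₂ fun p hp => iInf₂_le (⟨p, hp.1.1⟩ : PrimeSpectrum A) hp.1.2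

lemma minGens_le_iff_isGeneratedModulo_bot (hI : I.FG) :
    minGens I ≤ r ↔ IsGeneratedModulo ⊥ I r := by
  classical
  have hrange (s : Finset A) : Set.range (fun i => (s.equivFin.symm i : A)) = s :=
    (s.equivFin.symm.surjective.range_comp Subtype.val).trans Subtype.range_coe
  constructor
  · intro h
    obtain ⟨s, hs⟩ := hI
    obtain ⟨g, hg⟩ := Nat.sInf_mem (s := {k : ℕ | ∃ g : Fin k → A, I = span (Set.range g)})
      ⟨s.card, fun i => s.equivFin.symm i, by rw [← hs, hrange]⟩
    refine ⟨Finset.univ.image g, Finset.card_image_le.trans ?_, by simpa using hg⟩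
    rwa [Finset.card_univ, Fintype.card_fin]
  · rintro ⟨s, hcard, hs⟩
    refine le_trans (Nat.sInf_le ⟨fun i => s.equivFin.symm i, ?_⟩) hcard
    rw [hrange, hs, bot_sup_eq, Ideal.submodule_span_eq]

lemma IsCompleteIntersectionIdeal.isGeneratedModulo_bot {R : Type*} [CommRing R] [IsLocalRing R]
    [IsNoetherianRing R] {Q : Ideal R} (hQ : IsCompleteIntersectionIdeal Q) {n : ℕ}
    (hn : (IsLocalRing.maximalIdeal R).height ≤ n) : IsGeneratedModulo ⊥ Q n := by
  classical
  obtain ⟨k, g, rfl, hreg, hproper⟩ := hQ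
  obtain ⟨P, hP⟩ := associatedPrimes.nonempty R R
  have hlen := length_le_coheight_of_mem_associatedPrimes
    (List.forall_mem_ofFn_iff.2 fun i => IsLocalRing.le_maximalIdeal hproper (subset_span ⟨i, rfl⟩))
    (isWeaklyRegular_ofFn_iff.2 hreg) (Q := ⟨P, IsAssociatedPrime.isPrime hP⟩) hP
  have hk : (k : ℕ∞) ≤ n := by
    rw [List.length_ofFn] at hlen
    exact hlen.trans (le_add_self.trans ((height_add_coheight_le_height_maximalIdeal _).trans hn))
  refine ⟨Finset.univ.image g, Finset.card_image_le.trans ?_, by simp⟩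
  simpa using hk

end Invariants

section Graded

open HomogeneousIdeal (irrelevant)

variable {K A : Type*} [Field K] [CommRing A] [Algebra K A] {𝒜 : ℕ → Submodule K A}

lemma IsStdGraded.irrelevant_le_span [GradedAlgebra 𝒜] (h𝒜 : IsStdGraded 𝒜) :
    (irrelevant 𝒜).toIdeal ≤ span (𝒜 1 : Set A) := by
  refine (HomogeneousIdeal.toIdeal_irrelevant_le 𝒜).2 fun i hi a ha => ?_
  obtain ⟨j, rfl⟩ := Nat.exists_eq_succ_of_ne_zero hi.ne'
  have ha' : a ∈ 𝒜 1 * 𝒜 j := h𝒜.2.1 j ▸ ha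
  exact Submodule.mul_induction_on ha'
    (fun x hx y _ => Ideal.mul_mem_right _ _ (subset_span hx)) fun _ _ => add_mem

lemma IsStdGraded.exists_mem_one_notMem [GradedAlgebra 𝒜] (h𝒜 : IsStdGraded 𝒜) {Q : Ideal A}
    (hQ : ¬ (irrelevant 𝒜).toIdeal ≤ Q) : ∃ l ∈ 𝒜 1, l ∉ Q := by
  by_contra! hle
  exact hQ (h𝒜.irrelevant_le_span.trans (span_le.2 hle))

lemma IsStdGraded.isNoetherianRing [GradedAlgebra 𝒜] (h𝒜 : IsStdGraded 𝒜) :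
    IsNoetherianRing A := by
  obtain ⟨hzero, hsucc, s, hs⟩ := h𝒜
  have hone : 𝒜 1 ≤ Subalgebra.toSubmodule (Algebra.adjoin K (s : Set A)) :=
    hs ▸ Submodule.span_le.2 Algebra.subset_adjoin
  have hle (n : ℕ) : 𝒜 n ≤ Subalgebra.toSubmodule (Algebra.adjoin K (s : Set A)) := by
    induction n with
    | zero => exact hzero ▸ Submodule.one_le.2 (Algebra.adjoin K (s : Set A)).one_mem
    | succ n ih =>
      exact hsucc n ▸ Submodule.mul_le.2 fun x hx y hy =>
        (Algebra.adjoin K (s : Set A)).mul_mem (hone hx) (ih hy)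
  have hadjoin : Algebra.adjoin K (s : Set A) = ⊤ := by
    rw [← Algebra.toSubmodule_eq_top, eq_top_iff,
      ← (DirectSum.Decomposition.isInternal 𝒜).submodule_iSup_eq_top]
    exact iSup_le hle
  have : Algebra.FiniteType K A := ⟨s, hadjoin⟩
  exact Algebra.FiniteType.isNoetherianRing K A

variable [GradedAlgebra 𝒜]

lemma isUnit_proj_zero_of_notMem_irrelevant (hzero : 𝒜 0 = 1) {a : A}
    (ha : a ∉ (irrelevant 𝒜).toIdeal) : IsUnit (GradedRing.proj 𝒜 0 a) := by
  obtain ⟨c, hc⟩ := Submodule.mem_one.1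
    (hzero.le (SetLike.coe_mem (DirectSum.decompose 𝒜 a 0)))
  rw [HomogeneousIdeal.mem_iff, HomogeneousIdeal.mem_irrelevant_iff, GradedRing.proj_apply,
    ← hc] at ha
  rw [GradedRing.proj_apply, ← hc]
  exact (IsUnit.mk0 c fun h => ha (by simp [h])).map (algebraMap K A)

lemma isPrime_irrelevant [Nontrivial A] (hzero : 𝒜 0 = 1) :
    (irrelevant 𝒜).toIdeal.IsPrime := by
  rw [HomogeneousIdeal.toIdeal_irrelevant]
  refine ⟨RingHom.ker_ne_top _, fun {a b} hab => or_iff_not_imp_left.2 fun ha => ?_⟩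
  rw [RingHom.mem_ker, map_mul] at hab
  exact (isUnit_proj_zero_of_notMem_irrelevant hzero ha).mul_right_eq_zero.1 hab

lemma le_irrelevant_of_isHomogeneous (hzero : 𝒜 0 = 1) {I : Ideal A} (hI : I.IsHomogeneous 𝒜)
    (htop : I ≠ ⊤) : I ≤ (irrelevant 𝒜).toIdeal := by
  intro a ha
  by_contra hirr
  exact htop (Ideal.eq_top_of_isUnit_mem _ (hI 0 ha)
    (isUnit_proj_zero_of_notMem_irrelevant hzero hirr))

lemma mem_of_mul_mem_of_notMem_irrelevant (hzero : 𝒜 0 = 1) {J : Ideal A}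
    (hJ : J.IsHomogeneous 𝒜) {s a : A} (hs : s ∉ (irrelevant 𝒜).toIdeal)
    (ha : SetLike.IsHomogeneousElem 𝒜 a) (hsa : s * a ∈ J) : a ∈ J := by
  obtain ⟨d, ha⟩ := ha
  have hcomp := hJ (0 + d) hsa
  rw [DirectSum.coe_decompose_mul_add_of_right_mem 𝒜 ha] at hcomp
  exact (Ideal.unit_mul_mem_iff_mem J (isUnit_proj_zero_of_notMem_irrelevant hzero hs)).1 hcomp

lemma mem_of_mul_mem_of_isHomogeneousElem {I J : Ideal A} (hI : I.IsHomogeneous 𝒜)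
    (hJ : J.IsHomogeneous 𝒜) {x : A} (hx : SetLike.IsHomogeneousElem 𝒜 x)
    (h : ∀ b ∈ I, SetLike.IsHomogeneousElem 𝒜 b → b * x ∈ J → b ∈ J) {a : A} (ha : a ∈ I)
    (hax : a * x ∈ J) : a ∈ J := by
  obtain ⟨d, hx⟩ := hx
  refine (hJ.mem_iff 𝒜).2 fun i => h _ (hI i ha) ⟨i, SetLike.coe_mem _⟩ ?_
  rw [← DirectSum.coe_decompose_mul_add_of_right_mem 𝒜 hx]
  exact hJ _ hax

lemma span_isHomogeneousElem_eq {I : Ideal A} (hI : I.IsHomogeneous 𝒜) :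
    span {a | a ∈ I ∧ SetLike.IsHomogeneousElem 𝒜 a} = I := by
  classical
  refine le_antisymm (span_le.2 fun a ha => ha.1) fun a ha => ?_
  rw [← DirectSum.sum_support_decompose 𝒜 a]
  exact sum_mem fun i _ => subset_span ⟨hI i ha, i, SetLike.coe_mem _⟩

lemma isHomogeneous_ofList {T : List A} (hT : ∀ t ∈ T, SetLike.IsHomogeneousElem 𝒜 t) :
    (ofList T).IsHomogeneous 𝒜 :=
  Ideal.homogeneous_span 𝒜 _ hT

lemma mem_of_algebraMap_mem_map (hzero : 𝒜 0 = 1) [(irrelevant 𝒜).toIdeal.IsPrime] {R : Type*}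
    [CommRing R] [Algebra A R] [IsLocalization.AtPrime R (irrelevant 𝒜).toIdeal] {J : Ideal A}
    (hJ : J.IsHomogeneous 𝒜) {a : A} (ha : SetLike.IsHomogeneousElem 𝒜 a)
    (hmap : algebraMap A R a ∈ J.map (algebraMap A R)) : a ∈ J := by
  obtain ⟨s, hs, hsa⟩ := (IsLocalization.algebraMap_mem_map_algebraMap_iff
    (irrelevant 𝒜).toIdeal.primeCompl _ _ _).1 hmap
  exact mem_of_mul_mem_of_notMem_irrelevant hzero hJ hs ha hsa

theorem exists_finset_isHomogeneousElem_span_eq [IsNoetherianRing A]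
    [(irrelevant 𝒜).toIdeal.IsPrime] (hzero : 𝒜 0 = 1) {I : Ideal A} (hI : I.IsHomogeneous 𝒜)
    {r : ℕ} (h : IsGeneratedModulo ⊥
      (I.map (algebraMap A (Localization.AtPrime (irrelevant 𝒜).toIdeal))) r) :
    ∃ s : Finset A, s.card ≤ r ∧ (∀ a ∈ s, SetLike.IsHomogeneousElem 𝒜 a) ∧ I = span s := by
  classical
  let φ := algebraMap A (Localization.AtPrime (irrelevant 𝒜).toIdeal)
  obtain ⟨t, htS, htcard, ht⟩ := h.exists_finset_subset (IsNoetherian.noetherian _)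
    (S := φ '' {a | a ∈ I ∧ SetLike.IsHomogeneousElem 𝒜 a})
    (by rw [bot_sup_eq, Ideal.submodule_span_eq, ← Ideal.map_span, span_isHomogeneousElem_eq hI])
  choose! f hf hφf using htS
  have hfhom : ∀ a ∈ t.image f, SetLike.IsHomogeneousElem 𝒜 a :=
    Finset.forall_mem_image.2 fun b hb => (hf hb).2
  refine ⟨t.image f, Finset.card_image_le.trans htcard, hfhom, le_antisymm ?_ ?_⟩
  · rw [← span_isHomogeneousElem_eq hI, span_le]
    rintro a ⟨haI, ha⟩
    refine mem_of_algebraMap_mem_map hzero (Ideal.homogeneous_span 𝒜 _ hfhom) ha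
      (R := Localization.AtPrime (irrelevant 𝒜).toIdeal) ?_
    have himage : φ '' (t.image f) = t := by
      rw [Finset.coe_image, Set.image_image]
      exact (Set.image_congr hφf).trans (Set.image_id _)
    rw [Ideal.map_span, himage, ← Ideal.submodule_span_eq, ← bot_sup_eq (Submodule.span _ _), ← ht]
    exact Ideal.mem_map_of_mem φ haI
  · exact span_le.2 fun a ha => (Finset.forall_mem_image (p := (· ∈ I)).2
      (fun b hb => (hf hb).1)) a ha

theorem HeightLeGrade.exists_finite_primes_height_le_length [IsNoetherianRing A] [Nontrivial A]
    (hCM : HeightLeGrade (irrelevant 𝒜).toIdeal) (hzero : 𝒜 0 = 1) {T : List A}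
    (hT : ∀ t ∈ T, SetLike.IsHomogeneousElem 𝒜 t) (hmem : ∀ t ∈ T, t ∈ (irrelevant 𝒜).toIdeal)
    (hreg : RingTheory.Sequence.IsWeaklyRegular A T) :
    ∃ S : Set (Ideal A), S.Finite ∧ (∀ Q ∈ S, Q.IsPrime ∧ Q.height ≤ T.length) ∧
      ∀ b, SetLike.IsHomogeneousElem 𝒜 b → b ∉ ofList T →
        ∃ Q ∈ S, ∀ a, a * b ∈ ofList T → a ∈ Q := by
  have := isPrime_irrelevant hzero
  let R := Localization.AtPrime (irrelevant 𝒜).toIdeal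
  refine ⟨comap (algebraMap A R) '' associatedPrimes R (R ⧸ (ofList T).map (algebraMap A R)),
    (associatedPrimes.finite R _).image _, ?_, fun b hb hbT => ?_⟩
  · rintro _ ⟨Q, hQ, rfl⟩
    have := IsAssociatedPrime.isPrime hQ
    exact ⟨inferInstance, hCM.height_comap_le_length_of_mem_associatedPrimes hmem hreg hQ⟩
  · have hb0 : Ideal.Quotient.mk ((ofList T).map (algebraMap A R)) (algebraMap A R b) ≠ 0 :=
      Ideal.Quotient.eq_zero_iff_mem.not.2 fun h =>
        hbT (mem_of_algebraMap_mem_map hzero (isHomogeneous_ofList hT) hb h)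
    obtain ⟨Q, hQ, hle⟩ := exists_le_isAssociatedPrime_of_isNoetherianRing R _ hb0
    refine ⟨_, ⟨Q, hQ, rfl⟩, fun a ha => hle ?_⟩
    rw [Submodule.mem_colon_singleton, Submodule.mem_bot, ← Ideal.Quotient.mk_eq_mk,
      ← Submodule.Quotient.mk_smul, Submodule.Quotient.mk_eq_zero, smul_eq_mul, ← map_mul]
    exact Ideal.mem_map_of_mem _ ha

section Avoidance

lemma exists_mem_forall_notMem_of_finite {V ι : Type*} [Infinite K] [AddCommGroup V] [Module K V]
    [Finite ι] {W : Submodule K V} {N : ι → Submodule K V} (h : ∀ i, ¬ W ≤ N i) :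
    ∃ w ∈ W, ∀ i, w ∉ N i := by
  by_contra! hcover
  obtain ⟨i, hi⟩ := Subspace.exists_eq_top_of_iUnion_eq_univ (k := K)
    (p := fun i => (N i).comap W.subtype) (Set.eq_univ_iff_forall.2 fun w => by
      simpa using hcover w w.2)
  exact h i (Submodule.comap_subtype_eq_top.1 hi)

lemma sup_span_singleton_eq_of_notMem (hzero : 𝒜 0 = 1) {G : Ideal A} (hG : G.IsHomogeneous 𝒜)
    {d : ℕ} {g x : A} (hg : g ∈ 𝒜 d) (hx : x ∈ 𝒜 d) (hxG : x ∉ G) (hxg : x ∈ G ⊔ span {g}) :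
    G ⊔ span {x} = G ⊔ span {g} := by
  obtain ⟨u, hu, v, hv, hsum⟩ := Submodule.mem_sup.1 hxg
  obtain ⟨a, rfl⟩ := Ideal.mem_span_singleton'.1 hv
  have hag : (DirectSum.decompose 𝒜 (a * g) d : A) = GradedRing.proj 𝒜 0 a * g := by
    rw [GradedRing.proj_apply, ← DirectSum.coe_decompose_mul_add_of_right_mem 𝒜 hg, zero_add]
  have hdeg : DirectSum.decompose 𝒜 u d + GradedRing.proj 𝒜 0 a * g = x := by
    rw [← hag, ← Submodule.coe_add, ← DirectSum.add_apply, ← DirectSum.decompose_add, hsum,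
      DirectSum.decompose_of_mem_same 𝒜 hx]
  have hunit : IsUnit (GradedRing.proj 𝒜 0 a) := by
    refine isUnit_proj_zero_of_notMem_irrelevant hzero fun ha => hxG ?_
    rw [HomogeneousIdeal.mem_iff, HomogeneousIdeal.mem_irrelevant_iff] at ha
    rw [← hdeg, ha, zero_mul, add_zero]
    exact hG d hu
  refine le_antisymm (sup_le le_sup_left ((span_singleton_le_iff_mem _).2 hxg))
    (sup_le le_sup_left ((span_singleton_le_iff_mem _).2 ?_))
  rw [← Ideal.unit_mul_mem_iff_mem _ hunit, eq_sub_of_add_eq' hdeg]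
  exact sub_mem (Submodule.mem_sup_right (mem_span_singleton_self x))
    (Submodule.mem_sup_left (hG d hu))

lemma not_span_inf_le_of_not_subset {s : Set A} {D : ℕ} (hs : ∀ a ∈ s, ∃ d ≤ D, a ∈ 𝒜 d)
    {N : Ideal A} (hN : ∃ l ∈ 𝒜 1, ∀ a, l * a ∈ N → a ∈ N) (hsN : ¬ s ⊆ N) :
    ¬ (span s).restrictScalars K ⊓ 𝒜 D ≤ N.restrictScalars K := by
  obtain ⟨a, has, haN⟩ := Set.not_subset.1 hsN
  obtain ⟨d, hd, ha⟩ := hs a has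
  obtain ⟨l, hl, hsat⟩ := hN
  have hpow (k : ℕ) (h : l ^ k * a ∈ N) : a ∈ N := by
    induction k with
    | zero => simpa using h
    | succ k ih => exact ih (hsat _ (by rwa [← mul_assoc, ← pow_succ']))
  refine fun hle => haN (hpow (D - d) (hle ⟨Ideal.mul_mem_left _ _ (subset_span has), ?_⟩))
  simpa [Nat.sub_add_cancel hd] using SetLike.mul_mem_graded (SetLike.pow_mem_graded (D - d) hl) ha

-- The members of `𝒩` need not be homogeneous: as a linear form is a nonzerodivisor modulo each of
-- them, none of them contains the part of `span s` in the largest degree of an element of `s`.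
open scoped Classical in
theorem exists_isHomogeneousElem_span_erase_sup_eq [Infinite K] (hzero : 𝒜 0 = 1) {s : Finset A}
    (hne : s.Nonempty) (hs : ∀ a ∈ s, SetLike.IsHomogeneousElem 𝒜 a) {𝒩 : Set (Ideal A)}
    (hfin : 𝒩.Finite) (hsat : ∀ N ∈ 𝒩, ∃ l ∈ 𝒜 1, ∀ a, l * a ∈ N → a ∈ N)
    (hsN : ∀ N ∈ 𝒩, ¬ (s : Set A) ⊆ N) :
    ∃ g ∈ s, ∃ x, SetLike.IsHomogeneousElem 𝒜 x ∧
      span (s.erase g : Set A) ⊔ span {x} = span (s : Set A) ∧ ∀ N ∈ 𝒩, x ∉ N := by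
  choose! d hd using hs
  obtain ⟨g, hgs, hmax⟩ := s.exists_max_image d hne
  set G := span (s.erase g : Set A)
  have hspan : span (s : Set A) = G ⊔ span {g} := by
    rw [← Ideal.span_union, Finset.coe_erase, Set.sdiff_union_of_subset (by simpa using hgs)]
  let 𝒩' : Set (Ideal A) := 𝒩 ∪ {N | N = G ∧ g ∉ G}
  have : Finite 𝒩' := hfin.union ((Set.finite_singleton G).subset fun _ h => h.1)
  obtain ⟨x, ⟨hxs, hxd⟩, hx⟩ := exists_mem_forall_notMem_of_finite
    (W := (span (s : Set A)).restrictScalars K ⊓ 𝒜 (d g))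
    (N := fun N : 𝒩' => N.1.restrictScalars K) (by
      rintro ⟨N, hN | ⟨rfl, hgG⟩⟩
      · exact not_span_inf_le_of_not_subset (fun a ha => ⟨d a, hmax a ha, hd a ha⟩)
          (hsat N hN) (hsN N hN)
      · exact fun hle => hgG (hle ⟨subset_span hgs, hd g hgs⟩))
  refine ⟨g, hgs, x, ⟨d g, hxd⟩, ?_, fun N hN => hx ⟨N, .inl hN⟩⟩
  rw [hspan] at hxs ⊢
  by_cases hgG : g ∈ G
  · rw [sup_eq_left.2 ((span_singleton_le_iff_mem _).2 hgG)] at hxs ⊢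
    exact sup_eq_left.2 ((span_singleton_le_iff_mem _).2 hxs)
  · exact sup_span_singleton_eq_of_notMem hzero
      (Ideal.homogeneous_span 𝒜 _ fun a ha => ⟨d a, hd a (Finset.mem_of_mem_erase ha)⟩)
      (hd g hgs) hxd (hx ⟨G, .inr ⟨rfl, hgG⟩⟩) hxs

end Avoidance

end Graded

section PartialSystem

open HomogeneousIdeal (irrelevant)

variable {K A : Type*} [Field K] [CommRing A] [Algebra K A] {𝒜 : ℕ → Submodule K A}

/-- The primes over `I` of height at most `I.height`; for a proper ideal of a Noetherian ring these
are the minimal primes of `I` whose height is that of `I`. -/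
def primesOfMinimalHeight (I : Ideal A) : Set (PrimeSpectrum A) :=
  {p | I ≤ p.asIdeal ∧ p.asIdeal.height ≤ I.height}

lemma mem_minimalPrimes_of_mem_primesOfMinimalHeight [IsNoetherianRing A] {I : Ideal A}
    {p : PrimeSpectrum A} (hp : p ∈ primesOfMinimalHeight I) : p.asIdeal ∈ I.minimalPrimes :=
  Ideal.mem_minimalPrimes_of_height_le hp.1 hp.2

lemma finite_primesOfMinimalHeight [IsNoetherianRing A] (I : Ideal A) :
    (primesOfMinimalHeight I).Finite :=
  Set.Finite.of_injOn (fun _ => mem_minimalPrimes_of_mem_primesOfMinimalHeight)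
    (fun _ _ _ _ => PrimeSpectrum.ext) (Ideal.finite_minimalPrimes_of_isNoetherianRing A I)

variable (𝒜) in
/-- `T` is a homogeneous weakly regular sequence which is completed to a homogeneous system of
generators of `I` by at most `r + 1` elements, `r` elements being sufficient locally at the primes
of minimal height over `I`. -/
structure IsPartialSystem (I : Ideal A) (r : ℕ) (T : List A) : Prop where
  isHomogeneousElem : ∀ t ∈ T, SetLike.IsHomogeneousElem 𝒜 t
  isWeaklyRegular : RingTheory.Sequence.IsWeaklyRegular A T
  exists_generators : ∃ s : Finset A, s.card ≤ r + 1 ∧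
    (∀ a ∈ s, SetLike.IsHomogeneousElem 𝒜 a) ∧ I = ofList T ⊔ span s
  isGeneratedModulo_map : ∀ p ∈ primesOfMinimalHeight I,
    IsGeneratedModulo ((ofList T).map (algebraMap A (Localization.AtPrime p.asIdeal)))
      (I.map (algebraMap A (Localization.AtPrime p.asIdeal))) r

namespace IsPartialSystem

variable {I : Ideal A} {r : ℕ} {T : List A}

lemma ofList_le (h : IsPartialSystem 𝒜 I r T) : ofList T ≤ I := by
  obtain ⟨s, -, -, hI⟩ := h.exists_generators
  exact hI ▸ le_sup_left

lemma exists_eq_sup_span_singleton (h : IsPartialSystem 𝒜 I 0 T) :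
    ∃ g, SetLike.IsHomogeneousElem 𝒜 g ∧ I = ofList T ⊔ span {g} := by
  obtain ⟨s, hcard, hs, hI⟩ := h.exists_generators
  obtain rfl | hne := s.eq_empty_or_nonempty
  · exact ⟨0, ⟨0, zero_mem _⟩, by simpa using hI⟩
  · obtain ⟨g, rfl⟩ := Finset.card_eq_one.1 (hcard.antisymm hne.card_pos)
    exact ⟨g, by simpa using hs, by simpa using hI⟩

variable [GradedAlgebra 𝒜]

lemma exists_avoiding_isWeaklyRegular [IsNoetherianRing A] [Nontrivial A] (h𝒜 : IsStdGraded 𝒜)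
    (hCM : HeightLeGrade (irrelevant 𝒜).toIdeal) (hI : I ≤ (irrelevant 𝒜).toIdeal)
    (h : IsPartialSystem 𝒜 I r T) (hlen : T.length < I.height) :
    ∃ 𝒩 : Set (Ideal A), 𝒩.Finite ∧
      (∀ N ∈ 𝒩, ofList T ≤ N ∧ ¬ I ≤ N ∧ ∃ l ∈ 𝒜 1, ∀ a, l * a ∈ N → a ∈ N) ∧
      ∀ x, SetLike.IsHomogeneousElem 𝒜 x → (∀ N ∈ 𝒩, x ∉ N) →
        RingTheory.Sequence.IsWeaklyRegular A (T ++ [x]) := by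
  obtain ⟨S, hfin, hS, hreg⟩ := hCM.exists_finite_primes_height_le_length h𝒜.1 h.isHomogeneousElem
    (fun t ht => hI (h.ofList_le (subset_span ht))) h.isWeaklyRegular
  refine ⟨{Q ∈ S | ofList T ≤ Q}, hfin.subset (Set.sep_subset _ _), ?_, fun x hx hxN => ?_⟩
  · rintro Q ⟨hQS, hTQ⟩
    obtain ⟨hprime, hheight⟩ := hS Q hQS
    have hIQ : ¬ I ≤ Q := fun hle => (hlen.trans_le (Ideal.height_mono hle)).not_ge hheight
    obtain ⟨l, hl, hlQ⟩ := h𝒜.exists_mem_one_notMem fun hle => hIQ (hI.trans hle)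
    exact ⟨hTQ, hIQ, l, hl, fun a ha => (hprime.mem_or_mem ha).resolve_left hlQ⟩
  · have hhom := isHomogeneous_ofList h.isHomogeneousElem
    refine (RingTheory.Sequence.isWeaklyRegular_append_iff A T [x]).2 ⟨h.isWeaklyRegular, ?_⟩
    rw [RingTheory.Sequence.isWeaklyRegular_singleton_iff,
      isSMulRegular_quotient_iff_mem_of_smul_mem]
    simp only [smul_eq_mul, Ideal.mul_top]
    intro a ha
    refine mem_of_mul_mem_of_isHomogeneousElem (Ideal.IsHomogeneous.top 𝒜) hhom hx
      (fun b _ hb hbx => ?_) Submodule.mem_top (mul_comm x a ▸ ha)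
    by_contra hbT
    obtain ⟨Q, hQS, hQ⟩ := hreg b hb hbT
    exact hxN Q ⟨hQS, fun t ht => hQ t (Ideal.mul_mem_right _ _ ht)⟩ (hQ x (mul_comm b x ▸ hbx))

lemma exists_avoiding_isGeneratedModulo [IsNoetherianRing A] (h𝒜 : IsStdGraded 𝒜)
    (hirr : ∀ p ∈ primesOfMinimalHeight I, ¬ (irrelevant 𝒜).toIdeal ≤ p.asIdeal)
    (h : IsPartialSystem 𝒜 I (r + 1) T) (hlen : T.length < I.height) :
    ∃ 𝒩 : Set (Ideal A), 𝒩.Finite ∧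
      (∀ N ∈ 𝒩, ofList T ≤ N ∧ ¬ I ≤ N ∧ ∃ l ∈ 𝒜 1, ∀ a, l * a ∈ N → a ∈ N) ∧
      ∀ x ∈ I, (∀ N ∈ 𝒩, x ∉ N) → ∀ p ∈ primesOfMinimalHeight I,
        IsGeneratedModulo ((ofList (T ++ [x])).map (algebraMap A (Localization.AtPrime p.asIdeal)))
          (I.map (algebraMap A (Localization.AtPrime p.asIdeal))) r := by
  refine ⟨(fun p => residualIdeal (ofList T) I p.asIdeal) '' primesOfMinimalHeight I,
    (finite_primesOfMinimalHeight I).image _, ?_, fun x hxI hx p hp => ?_⟩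
  · rintro _ ⟨p, hp, rfl⟩
    obtain ⟨l, hl, hlp⟩ := h𝒜.exists_mem_one_notMem (hirr p hp)
    exact ⟨le_residualIdeal, not_le_residualIdeal (IsNoetherian.noetherian I)
      (not_map_le_map_ofList (h.ofList_le.trans hp.1) hlen), l, hl,
      fun a => mem_residualIdeal_of_mul_mem hlp⟩
  · rw [Ideal.ofList_append, Ideal.ofList_singleton]
    exact (h.isGeneratedModulo_map p hp).map_sup_span_singleton hxI (hx _ ⟨p, hp, rfl⟩)

theorem exists_append [Infinite K] [IsNoetherianRing A] [Nontrivial A] (h𝒜 : IsStdGraded 𝒜)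
    (hCM : HeightLeGrade (irrelevant 𝒜).toIdeal) (hI : I ≤ (irrelevant 𝒜).toIdeal)
    (hirr : ∀ p ∈ primesOfMinimalHeight I, ¬ (irrelevant 𝒜).toIdeal ≤ p.asIdeal)
    (h : IsPartialSystem 𝒜 I (r + 1) T) (hlen : T.length < I.height) :
    ∃ x, IsPartialSystem 𝒜 I r (T ++ [x]) := by
  classical
  obtain ⟨𝒩₁, hfin₁, h𝒩₁, hreg⟩ := h.exists_avoiding_isWeaklyRegular h𝒜 hCM hI hlen
  obtain ⟨𝒩₂, hfin₂, h𝒩₂, hloc⟩ := h.exists_avoiding_isGeneratedModulo h𝒜 hirr hlen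
  have h𝒩 : ∀ N ∈ 𝒩₁ ∪ 𝒩₂, ofList T ≤ N ∧ ¬ I ≤ N ∧ ∃ l ∈ 𝒜 1, ∀ a, l * a ∈ N → a ∈ N :=
    fun N hN => hN.elim (h𝒩₁ N) (h𝒩₂ N)
  obtain ⟨s, hcard, hs, hgen⟩ := h.exists_generators
  have hne : s.Nonempty := by
    have := isPrime_irrelevant h𝒜.1
    rw [Finset.nonempty_iff_ne_empty]
    rintro rfl
    refine not_map_le_map_ofList (h.ofList_le.trans hI) hlen (Ideal.map_mono ?_)
    simp [hgen]
  obtain ⟨g, hg, x, hx, hspan, hxN⟩ := exists_isHomogeneousElem_span_erase_sup_eq h𝒜.1 hne hs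
    (hfin₁.union hfin₂) (fun N hN => (h𝒩 N hN).2.2)
    fun N hN hsN => (h𝒩 N hN).2.1 (hgen ▸ sup_le (h𝒩 N hN).1 (span_le.2 hsN))
  have hxI : x ∈ I := by
    rw [hgen, ← hspan]
    exact Submodule.mem_sup_right (Submodule.mem_sup_right (mem_span_singleton_self x))
  refine ⟨x, fun t ht => ?_, hreg x hx fun N hN => hxN N (.inl hN),
    ⟨s.erase g, ?_, fun a ha => hs a (Finset.mem_of_mem_erase ha), ?_⟩,
    hloc x hxI fun N hN => hxN N (.inr hN)⟩
  · obtain ht | ht := List.mem_append.1 ht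
    · exact h.isHomogeneousElem t ht
    · rwa [List.mem_singleton.1 ht]
  · rw [Finset.card_erase_of_mem hg]
    lia
  · rw [Ideal.ofList_append, Ideal.ofList_singleton, sup_assoc, sup_comm (span {x}), hspan, ← hgen]

theorem exists_zero_length_eq [Infinite K] [IsNoetherianRing A] [Nontrivial A]
    (h𝒜 : IsStdGraded 𝒜) (hCM : HeightLeGrade (irrelevant 𝒜).toIdeal)
    (hI : I ≤ (irrelevant 𝒜).toIdeal)
    (hirr : ∀ p ∈ primesOfMinimalHeight I, ¬ (irrelevant 𝒜).toIdeal ≤ p.asIdeal)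
    (h : IsPartialSystem 𝒜 I r T) (hheight : I.height = T.length + r) :
    ∃ T', IsPartialSystem 𝒜 I 0 T' ∧ I.height = T'.length := by
  induction r generalizing T with
  | zero => exact ⟨T, h, by simpa using hheight⟩
  | succ r ih =>
    have hlen : T.length < I.height := by
      rw [hheight]
      exact_mod_cast Nat.lt_add_of_pos_right r.succ_pos
    obtain ⟨x, hx⟩ := h.exists_append h𝒜 hCM hI hirr hlen
    refine ih hx ?_
    rw [hheight, List.length_append, List.length_singleton]
    push_cast
    ring

lemma isHomogeneous (h : IsPartialSystem 𝒜 I r T) : I.IsHomogeneous 𝒜 := by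
  obtain ⟨s, -, hs, hI⟩ := h.exists_generators
  exact hI ▸ (isHomogeneous_ofList h.isHomogeneousElem).sup (Ideal.homogeneous_span 𝒜 _ hs)

theorem mem_ofList_of_mul_mem [IsNoetherianRing A] [Nontrivial A] (hzero : 𝒜 0 = 1)
    (hCM : HeightLeGrade (irrelevant 𝒜).toIdeal) (hI : I ≤ (irrelevant 𝒜).toIdeal)
    (h : IsPartialSystem 𝒜 I 0 T) (hheight : T.length ≤ I.height) {g : A}
    (hg : SetLike.IsHomogeneousElem 𝒜 g) (hgen : I = ofList T ⊔ span {g}) {a : A} (ha : a ∈ I)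
    (hag : a * g ∈ ofList T) : a ∈ ofList T := by
  obtain ⟨S, -, hS, hreg⟩ := hCM.exists_finite_primes_height_le_length hzero h.isHomogeneousElem
    (fun t ht => hI (h.ofList_le (subset_span ht))) h.isWeaklyRegular
  refine mem_of_mul_mem_of_isHomogeneousElem h.isHomogeneous
    (isHomogeneous_ofList h.isHomogeneousElem) hg (fun b hbI hb hbg => ?_) ha hag
  by_contra hbT
  obtain ⟨Q, hQS, hQ⟩ := hreg b hb hbT
  obtain ⟨hprime, hQheight⟩ := hS Q hQS
  have hIQ : I ≤ Q := by
    rw [hgen]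
    exact sup_le (fun t ht => hQ t (Ideal.mul_mem_right _ _ ht))
      ((span_singleton_le_iff_mem _).2 (hQ g (mul_comm b g ▸ hbg)))
  have hloc := (h.isGeneratedModulo_map ⟨Q, hprime⟩ ⟨hIQ, hQheight.trans hheight⟩).eq_of_zero
  obtain ⟨c, hc, hcb⟩ := (IsLocalization.algebraMap_mem_map_algebraMap_iff
    Q.primeCompl (Localization.AtPrime Q) _ _).1 (hloc ▸ Ideal.mem_map_of_mem _ hbI)
  exact hc (hQ c hcb)

theorem exists_isDSequence [IsNoetherianRing A] [Nontrivial A] (hzero : 𝒜 0 = 1)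
    (hCM : HeightLeGrade (irrelevant 𝒜).toIdeal) (hI : I ≤ (irrelevant 𝒜).toIdeal)
    (h : IsPartialSystem 𝒜 I 0 T) (hheight : T.length ≤ I.height) :
    ∃ f : Fin (T.length + 1) → A, (∀ i, SetLike.IsHomogeneousElem 𝒜 (f i)) ∧
      I = span (Set.range f) ∧ IsDSequence f ∧ f ∘ Fin.castSucc = T.get := by
  obtain ⟨g, hg, hgen⟩ := h.exists_eq_sup_span_singleton
  have hspan : span (Set.range T.get) = ofList T := by rw [Set.range_list_get]
  refine ⟨Fin.snoc T.get g, Fin.forall_fin_succ'.2 ⟨fun i => ?_, ?_⟩, ?_, isDSequence_snoc ?_ ?_,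
    Fin.snoc_comp_castSucc⟩
  · rw [Fin.snoc_castSucc]
    exact h.isHomogeneousElem _ (T.get_mem i)
  · rwa [Fin.snoc_last]
  · rw [Fin.range_snoc, span_insert, hspan, sup_comm, ← hgen]
  · rw [List.ofFn_get]
    exact h.isWeaklyRegular
  · rw [hspan, ← hgen]
    exact fun a => h.mem_ofList_of_mul_mem hzero hCM hI hheight hg hgen

end IsPartialSystem

end PartialSystem

section AlmostCompleteIntersection

open HomogeneousIdeal (irrelevant)

lemma IsACI.minGens_eq {A : Type*} [CommRing A] {I : Ideal A} {n : ℕ} (hACI : IsACI I)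
    (hheight : I.height = n) : minGens I = n + 1 := by
  have h := hACI.1
  rw [idealHeight_eq_height, hheight] at h
  exact_mod_cast h

variable {A : Type*} [CommRing A] [IsNoetherianRing A] {I : Ideal A} {n : ℕ}

lemma IsACI.isGeneratedModulo_bot_map (hACI : IsACI I) (hheight : I.height = n)
    {p : PrimeSpectrum A} (hp : p ∈ primesOfMinimalHeight I) :
    IsGeneratedModulo ⊥ (I.map (algebraMap A (Localization.AtPrime p.asIdeal))) n := by
  refine (hACI.2 p.asIdeal (mem_minimalPrimes_of_mem_primesOfMinimalHeight hp)
    p.isPrime).isGeneratedModulo_bot ?_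
  rw [← IsLocalization.height_under p.asIdeal.primeCompl,
    IsLocalization.AtPrime.under_maximalIdeal _ p.asIdeal]
  exact hp.2.trans hheight.le

variable {K : Type*} [Field K] [Algebra K A] {𝒜 : ℕ → Submodule K A} [GradedAlgebra 𝒜]

lemma IsACI.not_irrelevant_le [(irrelevant 𝒜).toIdeal.IsPrime] (hzero : 𝒜 0 = 1)
    (hhom : I.IsHomogeneous 𝒜) (hACI : IsACI I) (hheight : I.height = n)
    {p : PrimeSpectrum A} (hp : p ∈ primesOfMinimalHeight I) :
    ¬ (irrelevant 𝒜).toIdeal ≤ p.asIdeal := by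
  intro hle
  have hI : I ≠ ⊤ := ne_top_of_le_ne_top p.isPrime.ne_top hp.1
  have hmin := mem_minimalPrimes_of_mem_primesOfMinimalHeight hp
  have hpirr : p.asIdeal = (irrelevant 𝒜).toIdeal :=
    le_antisymm (hmin.2 ⟨inferInstance, le_irrelevant_of_isHomogeneous hzero hhom hI⟩ hle) hle
  obtain rfl : p = ⟨(irrelevant 𝒜).toIdeal, inferInstance⟩ := PrimeSpectrum.ext hpirr
  obtain ⟨s, hcard, -, hs⟩ := exists_finset_isHomogeneousElem_span_eq hzero hhom
    (hACI.isGeneratedModulo_bot_map hheight hp)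
  have hμ : minGens I ≤ n := (minGens_le_iff_isGeneratedModulo_bot (IsNoetherian.noetherian I)).2
    ⟨s, hcard, by rw [bot_sup_eq, hs, Ideal.submodule_span_eq]⟩
  rw [hACI.minGens_eq hheight] at hμ
  exact n.lt_irrefl hμ

lemma IsACI.isPartialSystem_nil [(irrelevant 𝒜).toIdeal.IsPrime] (hzero : 𝒜 0 = 1)
    (hhom : I.IsHomogeneous 𝒜) (hACI : IsACI I) (hheight : I.height = n) :
    IsPartialSystem 𝒜 I n [] where
  isHomogeneousElem := by simp
  isWeaklyRegular := .nil A A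
  exists_generators := by
    have hgen := ((minGens_le_iff_isGeneratedModulo_bot (IsNoetherian.noetherian I)).1
      (hACI.minGens_eq hheight).le).map
        (algebraMap A (Localization.AtPrime (irrelevant 𝒜).toIdeal))
    rw [Ideal.map_bot] at hgen
    simpa only [ofList_nil, bot_sup_eq] using
      exists_finset_isHomogeneousElem_span_eq hzero hhom hgen
  isGeneratedModulo_map p hp := by
    rw [ofList_nil, Ideal.map_bot]
    exact hACI.isGeneratedModulo_bot_map hheight hp

end AlmostCompleteIntersection

theorem aci_generated_by_dSequence_general {K A : Type*} [Field K] [Infinite K] [CommRing A]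
    [Algebra K A] (𝒜 : ℕ → Submodule K A) [GradedAlgebra 𝒜] (h𝒜 : IsStdGraded 𝒜)
    (hCM : HeightLeGrade (HomogeneousIdeal.irrelevant 𝒜).toIdeal) {n : ℕ} {I : Ideal A}
    (hhom : I.IsHomogeneous 𝒜) (hACI : IsACI I) (hht : idealHeight I = n) :
    ∃ f : Fin (n + 1) → A, (∀ i, ∃ di : ℕ, f i ∈ 𝒜 di) ∧ I = span (Set.range f) ∧
      IsDSequence f ∧ IsRegSeq (f ∘ Fin.castSucc) := by
  have hheight : I.height = n := (idealHeight_eq_height I).symm.trans hht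
  have htop : I ≠ ⊤ := by
    rintro rfl
    simp at hheight
  have : Nontrivial A := not_subsingleton_iff_nontrivial.1 fun _ => htop (Subsingleton.elim _ _)
  have := h𝒜.isNoetherianRing
  have := isPrime_irrelevant h𝒜.1
  have hI := le_irrelevant_of_isHomogeneous h𝒜.1 hhom htop
  obtain ⟨T, hT, hlen⟩ := (hACI.isPartialSystem_nil h𝒜.1 hhom hheight).exists_zero_length_eq
    h𝒜 hCM hI (fun p => hACI.not_irrelevant_le h𝒜.1 hhom hheight) (by simpa using hheight)
  obtain rfl : n = T.length := by exact_mod_cast hheight.symm.trans hlen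
  obtain ⟨f, hf, hspan, hdseq, hfT⟩ := hT.exists_isDSequence h𝒜.1 hCM hI hlen.ge
  refine ⟨f, hf, hspan, hdseq, ?_⟩
  rw [hfT, isRegSeq_iff, List.ofFn_get, Set.range_list_get]
  exact ⟨hT.isWeaklyRegular, ne_top_of_le_ne_top htop hT.ofList_le⟩

section PolynomialRing

open MvPolynomial

variable (m : ℕ)

lemma isWeaklyRegular_ofFn_X (R : Type*) [CommRing R] :
    RingTheory.Sequence.IsWeaklyRegular (MvPolynomial (Fin m) R)
      (List.ofFn (X : Fin m → MvPolynomial (Fin m) R)) := by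
  refine isWeaklyRegular_ofFn_iff.2 fun i a ha => ?_
  rw [mem_ideal_span_X_image] at ha ⊢
  intro s hs
  obtain ⟨j, hji, hj⟩ := ha (s + Finsupp.single i 1) (by
    rwa [mem_support_iff, coeff_mul_X, ← mem_support_iff])
  have hij : i ≠ j := ne_of_gt hji
  exact ⟨j, hji, by simpa [hij] using hj⟩

lemma heightLeGrade_irrelevant_homogeneousSubmodule (K : Type*) [Field K] :
    HeightLeGrade (HomogeneousIdeal.irrelevant (homogeneousSubmodule (Fin m) K)).toIdeal := by
  have := isPrime_irrelevant (homogeneousSubmodule_zero (R := K) (Fin m))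
  refine ⟨_, List.forall_mem_ofFn_iff.2 fun i => ?_, isWeaklyRegular_ofFn_X m K, ?_⟩
  · exact HomogeneousIdeal.mem_irrelevant_of_mem _ one_pos (isHomogeneous_X K i)
  · have h := Ideal.height_le_ringKrullDim_of_isPrime
      (I := (HomogeneousIdeal.irrelevant (homogeneousSubmodule (Fin m) K)).toIdeal)
    rw [MvPolynomial.ringKrullDim_of_isNoetherianRing, ringKrullDim_eq_zero_of_field, zero_add,
      Nat.card_fin] at h
    rw [List.length_ofFn]
    exact_mod_cast h

lemma isStdGraded_homogeneousSubmodule (K : Type*) [Field K] :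
    IsStdGraded (homogeneousSubmodule (Fin m) K) := by
  refine ⟨homogeneousSubmodule_zero _, fun n => ?_, homogeneousSubmodule_fg _ _ _⟩
  rw [← homogeneousSubmodule_one_pow, pow_succ', homogeneousSubmodule_one_pow]

end PolynomialRing

/-- Proposition 1.4: a homogeneous almost complete intersection ideal of height `n` in a
polynomial ring over an infinite field is generated by a homogeneous d-sequence
`f_1, …, f_{n+1}` such that `f_1, …, f_n` is a regular sequence. -/
theorem aci_generated_by_dSequence (K : Type) [Field K] [Infinite K] (m n : ℕ)
    (I : Ideal (MvPolynomial (Fin m) K))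
    (hhom : Ideal.IsHomogeneous (MvPolynomial.homogeneousSubmodule (Fin m) K) I)
    (hACI : IsACI I) (hI : I ≠ ⊤)
    (hht : idealHeight I = (n : ℕ∞)) :
    ∃ f : Fin (n + 1) → MvPolynomial (Fin m) K,
      (∀ i, ∃ di : ℕ, f i ∈ MvPolynomial.homogeneousSubmodule (Fin m) K di) ∧
      I = Ideal.span (Set.range f) ∧
      IsDSequence f ∧
      IsRegSeq (f ∘ Fin.castSucc) := by
  exact aci_generated_by_dSequence_general _ (isStdGraded_homogeneousSubmodule m K)
    (heightLeGrade_irrelevant_homogeneousSubmodule m K) hhom hACI hht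
end
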